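/- For all ε > 0 and δ > 0 there exists a constant c > 0 (depending on δ and ε) such that, for 100% of fundamental discriminants D, the number of quadratic Dirichlet characters χ modulo |D| satisfying L(1,χ) ≥ exp(−c(log log |D|)^{1 − (log 2)/2 + ε}) is at least (1 − δ) times the total number of quadratic Dirichlet characters modulo |D|. -/

import Mathlib

open Filter Topology NumberField

noncomputable section

/-- A fundamental discriminant: an integer `D ≠ 1` that is either squarefree and `≡ 1 (mod 4)`,
or `4m` with `m` squarefree and `m ≡ 2, 3 (mod 4)`. -/
def IsFundDiscr (D : ℤ) : Prop :=
  D ≠ 1 ∧ ((Squarefree D ∧ D % 4 = 1) ∨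
    ∃ m : ℤ, D = 4 * m ∧ Squarefree m ∧ (m % 4 = 2 ∨ m % 4 = 3))

/-- The number of fundamental discriminants `D` with `|D| ≤ X` satisfying `P`. -/
def fdCount (P : ℤ → Prop) (X : ℝ) : ℕ :=
  Nat.card {D : ℤ // IsFundDiscr D ∧ |(D : ℝ)| ≤ X ∧ P D}

/-- The property `P` holds for 100% of fundamental discriminants. -/
def FdDensityOne (P : ℤ → Prop) : Prop :=
  Tendsto (fun X : ℝ => (fdCount P X : ℝ) / (fdCount (fun _ => True) X : ℝ)) atTop (𝓝 1)

/-! For real `s > 1` and `χ ^ 2 = 1`, expand `(log L(s, χ)) ^ 2` as a double Dirichlet series with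
nonnegative coefficients and average over the characters mod `q` with `χ ^ 2 = 1`. The average of
`χ(n)` is `1` if `n` is a square unit mod `q` and `0` otherwise, so passing from `q` to a divisor
`d` can only increase the average of `(log L(s, χ)) ^ 2`. The average of `log L(s, χ)` mod `d` is
nonnegative, while partial summation gives `log L(s, χ) ≤ log (2 + log d)` for `χ ≠ 1`. Hence the
large negative values are as rare as the large positive ones, and the second moment mod `d` is
`O (M (M / #{χ mod d : χ ^ 2 = 1} + log (2 + log d)))` with `M ≍ log log q` a bound for `log ζ(s)`
at `s = 1 + (log q) ^ (-3)`, a point close enough to `1` to control `L(1, χ)`.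

If `d` has about `log log q` quadratic characters and `log d` is a power of `log log q`, the
second moment is `O (log log q * log log log q)`, and Chebyshev's inequality proves the bound with
any exponent greater than `1 / 2`. Turán's variance method shows that for almost all `q` such a `d`
is found among the products of small odd primes dividing `q`.
-/

open scoped BigOperators
open ArithmeticFunction (vonMangoldt)

section Expect

variable {ι κ : Type*} {s : Finset ι} {f : ι → κ → ℝ}

lemma expect_tsum (hf : ∀ i ∈ s, Summable (f i)) :
    𝔼 i ∈ s, ∑' k, f i k = ∑' k, 𝔼 i ∈ s, f i k := by
  simp only [Finset.expect_eq_sum_div_card]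
  rw [tsum_div_const, Summable.tsum_finsetSum hf]

/- The mean is nonnegative, so the negative values contribute no more to `∑ |f|` than the
positive ones, which are small off the single index `i₀`. -/
lemma expect_sq_le_of_expect_nonneg {f : ι → ℝ} {i₀ : ι} (hi₀ : i₀ ∈ s) {M B : ℝ} (hB : 0 ≤ B)
    (hM : ∀ i ∈ s, |f i| ≤ M) (hfB : ∀ i ∈ s, i ≠ i₀ → f i ≤ B) (hf : 0 ≤ 𝔼 i ∈ s, f i) :
    𝔼 i ∈ s, f i ^ 2 ≤ 2 * M * (M / s.card + B) := by
  classical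
  have hM₀ : 0 ≤ M := (abs_nonneg _).trans (hM i₀ hi₀)
  have hs : (0 : ℝ) < s.card := Nat.cast_pos.2 (Finset.card_pos.2 ⟨i₀, hi₀⟩)
  have hpos : ∑ i ∈ s, max (f i) 0 ≤ M + s.card * B := by
    rw [← Finset.add_sum_erase _ _ hi₀]
    gcongr
    · exact max_le ((le_abs_self _).trans (hM i₀ hi₀)) hM₀
    · calc ∑ i ∈ s.erase i₀, max (f i) 0
          ≤ ∑ _ ∈ s.erase i₀, B := Finset.sum_le_sum fun i hi ↦
            max_le (hfB i (Finset.mem_of_mem_erase hi) (Finset.ne_of_mem_erase hi)) hB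
        _ ≤ s.card * B := by
            rw [Finset.sum_const, nsmul_eq_mul]
            gcongr
            exact Finset.erase_subset _ _
  have habs : ∑ i ∈ s, |f i| = 2 * ∑ i ∈ s, max (f i) 0 - ∑ i ∈ s, f i := by
    rw [Finset.mul_sum, ← Finset.sum_sub_distrib]
    refine Finset.sum_congr rfl fun i _ ↦ ?_
    rcases le_total 0 (f i) with h | h
    · rw [abs_of_nonneg h, max_eq_left h]; ring
    · rw [abs_of_nonpos h, max_eq_right h]; ring
  rw [Finset.expect_eq_sum_div_card, le_div_iff₀ hs, zero_mul] at hf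
  rw [Finset.expect_eq_sum_div_card, div_le_iff₀ hs]
  calc ∑ i ∈ s, f i ^ 2
      ≤ ∑ i ∈ s, M * |f i| := Finset.sum_le_sum fun i hi ↦ by
        rw [← sq_abs, sq]
        exact mul_le_mul_of_nonneg_right (hM i hi) (abs_nonneg _)
    _ = M * ∑ i ∈ s, |f i| := (Finset.mul_sum ..).symm
    _ ≤ M * (2 * (M + s.card * B)) := by gcongr; linarith
    _ = 2 * M * (M / s.card + B) * s.card := by field

end Expect

section QuadraticCharacters

lemma sum_mulChar_apply_eq_zero {R R' : Type*} [CommMonoid R] [CommRing R'] [IsDomain R']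
    {s : Finset (MulChar R R')} {ψ : MulChar R R'} (hψ : ∀ χ ∈ s, ψ * χ ∈ s) {a : R}
    (ha : ψ a ≠ 1) : ∑ χ ∈ s, χ a = 0 := by
  have hinj : Set.InjOn (ψ * ·) (s : Set (MulChar R R')) := (mul_right_injective ψ).injOn
  have h : ψ a * ∑ χ ∈ s, χ a = ∑ χ ∈ s, χ a := by
    rw [Finset.mul_sum]
    exact Finset.sum_nbij (ψ * ·) hψ hinj
      (Finset.surjOn_of_injOn_of_card_le _ hψ hinj le_rfl) fun _ _ ↦ rfl
  exact (mul_eq_zero.1 (by rw [sub_mul, h, one_mul, sub_self])).resolve_left (sub_ne_zero.2 ha)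

/-- The Dirichlet characters `χ` mod `q` with `χ ^ 2 = 1`: the quadratic characters together with
the principal one, so that they form a group. -/
def quadChars (q : ℕ) [NeZero q] : Finset (DirichletCharacter ℂ q) :=
  (Set.toFinite {χ : DirichletCharacter ℂ q | χ ^ 2 = 1}).toFinset

variable {q d : ℕ} [NeZero q] [NeZero d] {χ ψ : DirichletCharacter ℂ q}

lemma mem_quadChars : χ ∈ quadChars q ↔ χ ^ 2 = 1 := by
  simp [quadChars]

lemma one_mem_quadChars : (1 : DirichletCharacter ℂ q) ∈ quadChars q :=
  mem_quadChars.2 (one_pow 2)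

lemma quadChars_nonempty : (quadChars q).Nonempty := ⟨1, one_mem_quadChars⟩

lemma card_quadChars_pos : (0 : ℝ) < (quadChars q).card :=
  Nat.cast_pos.2 quadChars_nonempty.card_pos

lemma mul_mem_quadChars (hχ : χ ∈ quadChars q) (hψ : ψ ∈ quadChars q) :
    χ * ψ ∈ quadChars q := by
  rw [mem_quadChars] at *
  rw [mul_pow, hχ, hψ, one_mul]

lemma changeLevel_mem_quadChars (hd : d ∣ q) {χ : DirichletCharacter ℂ d} (hχ : χ ∈ quadChars d) :
    DirichletCharacter.changeLevel hd χ ∈ quadChars q := by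
  rw [mem_quadChars] at *
  rw [← map_pow, hχ, map_one]

lemma ofReal_re_of_mem_quadChars (hχ : χ ∈ quadChars q) (a : ZMod q) :
    ((χ a).re : ℂ) = χ a := by
  rcases MulChar.isQuadratic_iff_sq_eq_one.2 (mem_quadChars.1 hχ) a with h | h | h <;> simp [h]

lemma re_mul_of_mem_quadChars (hχ : χ ∈ quadChars q) (a b : ZMod q) :
    (χ (a * b)).re = (χ a).re * (χ b).re := by
  rw [map_mul, ← ofReal_re_of_mem_quadChars hχ a, ← ofReal_re_of_mem_quadChars hχ b,
    ← Complex.ofReal_mul]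
  simp only [Complex.ofReal_re]

open Classical in
lemma expect_quadChars_re (a : ZMod q) :
    𝔼 χ ∈ quadChars q, (χ a).re = if ∀ χ ∈ quadChars q, χ a = 1 then 1 else 0 := by
  split_ifs with h
  · rw [Finset.expect_congr rfl fun χ hχ ↦ by rw [h χ hχ, Complex.one_re],
      Finset.expect_const quadChars_nonempty]
  · push Not at h
    obtain ⟨ψ, hψ, hψa⟩ := h
    have hsum : ∑ χ ∈ quadChars q, χ a = 0 :=
      sum_mulChar_apply_eq_zero (fun χ hχ ↦ mul_mem_quadChars hψ hχ) hψa
    rw [Finset.expect_eq_sum_div_card, ← Complex.re_sum, hsum, Complex.zero_re, zero_div]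

lemma expect_quadChars_re_nonneg (a : ZMod q) : 0 ≤ 𝔼 χ ∈ quadChars q, (χ a).re := by
  rw [expect_quadChars_re]
  positivity

lemma apply_natCast_eq_one_of_dvd (hd : d ∣ q) {n : ℕ}
    (h : ∀ χ ∈ quadChars q, χ (n : ZMod q) = 1) {χ : DirichletCharacter ℂ d}
    (hχ : χ ∈ quadChars d) : χ (n : ZMod d) = 1 := by
  have hn : IsUnit (n : ZMod q) := by
    by_contra hn
    exact zero_ne_one (((1 : DirichletCharacter ℂ q).map_nonunit hn).symm.trans
      (h 1 one_mem_quadChars))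
  have hlevel := DirichletCharacter.changeLevel_eq_cast_of_dvd χ hd hn.unit
  rw [IsUnit.unit_spec, ZMod.cast_natCast hd] at hlevel
  rw [← hlevel, h _ (changeLevel_mem_quadChars hd hχ)]

lemma expect_quadChars_re_le_of_dvd (hd : d ∣ q) (n : ℕ) :
    𝔼 χ ∈ quadChars q, (χ (n : ZMod q)).re ≤ 𝔼 χ ∈ quadChars d, (χ (n : ZMod d)).re := by
  classical
  rw [expect_quadChars_re, expect_quadChars_re]
  split_ifs with hq hd'
  · exact le_rfl
  · exact absurd (fun χ ↦ apply_natCast_eq_one_of_dvd hd hq) hd'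
  · exact zero_le_one
  · exact le_rfl

end QuadraticCharacters

section LogL

lemma abs_re_apply_le_one {q : ℕ} (χ : DirichletCharacter ℂ q) (a : ZMod q) : |(χ a).re| ≤ 1 :=
  (Complex.abs_re_le_norm _).trans (χ.norm_le_one a)

/-- The coefficients of the Dirichlet series of `log ζ(s)`. -/
def logZetaCoeff (s : ℝ) (n : ℕ) : ℝ := vonMangoldt n / ((n : ℝ) ^ s * Real.log n)

/-- `Re log L(s, χ)` for real `s > 1`, defined by its Dirichlet series. It equals `log L(s, χ)`
when `χ` is real. -/
def logL {q : ℕ} (s : ℝ) (χ : DirichletCharacter ℂ q) : ℝ :=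
  ∑' n : ℕ, logZetaCoeff s n * (χ n).re

variable {q d : ℕ} {s : ℝ} {χ : DirichletCharacter ℂ q}

lemma logZetaCoeff_nonneg (s : ℝ) (n : ℕ) : 0 ≤ logZetaCoeff s n :=
  div_nonneg ArithmeticFunction.vonMangoldt_nonneg
    (mul_nonneg (Real.rpow_nonneg n.cast_nonneg s) (Real.log_natCast_nonneg n))

lemma logZetaCoeff_le (s : ℝ) (n : ℕ) : logZetaCoeff s n ≤ 1 / (n : ℝ) ^ s := by
  rw [logZetaCoeff, ← div_div, div_right_comm]
  gcongr
  exact div_le_one_of_le₀ ArithmeticFunction.vonMangoldt_le_log (Real.log_natCast_nonneg n)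

lemma summable_logZetaCoeff (hs : 1 < s) : Summable (logZetaCoeff s) :=
  .of_nonneg_of_le (logZetaCoeff_nonneg s) (logZetaCoeff_le s) (Real.summable_one_div_nat_rpow.2 hs)

lemma norm_logZetaCoeff_mul_re_le (s : ℝ) (χ : DirichletCharacter ℂ q) (n : ℕ) :
    ‖logZetaCoeff s n * (χ n).re‖ ≤ logZetaCoeff s n := by
  rw [Real.norm_eq_abs, abs_mul, abs_of_nonneg (logZetaCoeff_nonneg s n)]
  exact mul_le_of_le_one_right (logZetaCoeff_nonneg s n) (abs_re_apply_le_one χ n)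

lemma summable_logL (hs : 1 < s) (χ : DirichletCharacter ℂ q) :
    Summable fun n : ℕ ↦ logZetaCoeff s n * (χ n).re :=
  .of_norm_bounded (summable_logZetaCoeff hs) (norm_logZetaCoeff_mul_re_le s χ)

lemma abs_logL_le (hs : 1 < s) (χ : DirichletCharacter ℂ q) :
    |logL s χ| ≤ ∑' n, logZetaCoeff s n :=
  tsum_of_norm_bounded (summable_logZetaCoeff hs).hasSum (norm_logZetaCoeff_mul_re_le s χ)

lemma LFunction_eq_exp_logL [NeZero q] (hs : 1 < s) (hχ : χ ∈ quadChars q) :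
    χ.LFunction s = Real.exp (logL s χ) := by
  rw [DirichletCharacter.LFunction_eq_LSeries _ (by simpa using hs),
    ← DirichletCharacter.LSeries_eq_exp_LSeries χ (by simpa using hs), LSeries_def₀ (by simp),
    Complex.ofReal_exp, logL, Complex.ofReal_tsum]
  congr 1
  refine tsum_congr fun n ↦ ?_
  rw [Complex.ofReal_mul, ofReal_re_of_mem_quadChars hχ, logZetaCoeff]
  push_cast
  rw [Complex.ofReal_cpow n.cast_nonneg]
  simp [field]

lemma tsum_logZetaCoeff_eq_logL_one (s : ℝ) :
    ∑' n, logZetaCoeff s n = logL s (1 : DirichletCharacter ℂ 1) :=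
  tsum_congr fun n ↦ by rw [MulChar.one_apply (isUnit_of_subsingleton _), Complex.one_re, mul_one]

lemma tsum_one_div_rpow_le (hs : 1 < s) :
    ∑' n : ℕ, 1 / ((n : ℝ) + 1) ^ s ≤ 1 + 1 / (s - 1) := by
  have hterm : 0 ≤ s * ZetaAsymptotics.termTSum s :=
    mul_nonneg (by linarith) (tsum_nonneg fun n ↦ ZetaAsymptotics.term_nonneg (n + 1) s)
  linarith [ZetaAsymptotics.zeta_limit_aux1 hs]

lemma tsum_logZetaCoeff_le (hs : 1 < s) :
    ∑' n, logZetaCoeff s n ≤ Real.log (1 + 1 / (s - 1)) := by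
  have hzeta : (riemannZeta s).re = Real.exp (∑' n, logZetaCoeff s n) := by
    rw [tsum_logZetaCoeff_eq_logL_one,
      ← DirichletCharacter.LFunction_modOne_eq (χ := (1 : DirichletCharacter ℂ 1)),
      LFunction_eq_exp_logL hs one_mem_quadChars, Complex.ofReal_re]
  have hseries : riemannZeta s = (∑' n : ℕ, 1 / ((n : ℝ) + 1) ^ s : ℝ) := by
    rw [zeta_eq_tsum_one_div_nat_add_one_cpow (by simpa using hs), Complex.ofReal_tsum]
    refine tsum_congr fun n ↦ ?_
    push_cast [Complex.ofReal_cpow (show (0 : ℝ) ≤ n + 1 by positivity)]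
    rfl
  rw [Real.le_log_iff_exp_le (by have := sub_pos.2 hs; positivity), ← hzeta, hseries,
    Complex.ofReal_re]
  exact tsum_one_div_rpow_le hs

variable [NeZero q] [NeZero d]

lemma expect_logL_nonneg (hs : 1 < s) : 0 ≤ 𝔼 χ ∈ quadChars q, logL s χ := by
  simp only [logL]
  rw [expect_tsum fun χ _ ↦ summable_logL hs χ]
  refine tsum_nonneg fun n ↦ ?_
  rw [← Finset.mul_expect]
  exact mul_nonneg (logZetaCoeff_nonneg s n) (expect_quadChars_re_nonneg _)

lemma hasSum_logL_sq (hs : 1 < s) (hχ : χ ∈ quadChars q) :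
    HasSum (fun z : ℕ × ℕ ↦
      logZetaCoeff s z.1 * logZetaCoeff s z.2 * (χ ((z.1 * z.2 : ℕ) : ZMod q)).re)
      (logL s χ ^ 2) := by
  have hnorm := (summable_logL hs χ).norm
  have hsum := (summable_logL hs χ).hasSum.mul (summable_logL hs χ).hasSum
    (summable_mul_of_summable_norm hnorm hnorm)
  rw [sq]
  convert! hsum using 2 with z
  rw [Nat.cast_mul, re_mul_of_mem_quadChars hχ, mul_mul_mul_comm]

lemma hasSum_expect_logL_sq (hs : 1 < s) :
    HasSum (fun z : ℕ × ℕ ↦ logZetaCoeff s z.1 * logZetaCoeff s z.2 *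
      𝔼 χ ∈ quadChars q, (χ ((z.1 * z.2 : ℕ) : ZMod q)).re) (𝔼 χ ∈ quadChars q, logL s χ ^ 2) := by
  simp only [Finset.mul_expect]
  simp only [Finset.expect_eq_sum_div_card]
  exact (hasSum_sum fun χ hχ ↦ hasSum_logL_sq (q := q) hs hχ).div_const _

lemma expect_logL_sq_le_of_dvd (hd : d ∣ q) (hs : 1 < s) :
    𝔼 χ ∈ quadChars q, logL s χ ^ 2 ≤ 𝔼 χ ∈ quadChars d, logL s χ ^ 2 :=
  hasSum_le (fun _ ↦ mul_le_mul_of_nonneg_left (expect_quadChars_re_le_of_dvd hd _)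
    (mul_nonneg (logZetaCoeff_nonneg s _) (logZetaCoeff_nonneg s _)))
    (hasSum_expect_logL_sq hs) (hasSum_expect_logL_sq hs)

end LogL

section PartialSummation

variable {E : Type*} [NormedAddCommGroup E] [NormedSpace ℝ E]

lemma norm_sum_smul_le_of_sum_eq_zero {ι : Type*} {s : Finset ι} {c : ι → E} {g : ι → ℝ} {a b : ℝ}
    (hsum : ∑ i ∈ s, c i = 0) (hc : ∀ i ∈ s, ‖c i‖ ≤ 1) (hg : ∀ i ∈ s, g i ∈ Set.Icc a b) :
    ‖∑ i ∈ s, g i • c i‖ ≤ s.card * (b - a) := by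
  have hshift : ∑ i ∈ s, g i • c i = ∑ i ∈ s, (g i - a) • c i := by
    simp only [sub_smul, Finset.sum_sub_distrib, ← Finset.smul_sum, hsum, smul_zero, sub_zero]
  rw [hshift, ← nsmul_eq_mul]
  refine norm_sum_le_of_le s (fun i hi ↦ ?_) |>.trans_eq (Finset.sum_const _)
  obtain ⟨hai, hib⟩ := hg i hi
  rw [norm_smul, Real.norm_of_nonneg (sub_nonneg.2 hai)]
  exact (mul_le_of_le_one_right (sub_nonneg.2 hai) (hc i hi)).trans (by linarith)

lemma summable_smul_zmod [CompleteSpace E] {q : ℕ} {φ : ZMod q → E} {g : ℕ → ℝ}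
    (hφ₁ : ∀ a, ‖φ a‖ ≤ 1) (hg₀ : ∀ n, 0 ≤ g n) (hgs : Summable g) :
    Summable fun n : ℕ ↦ g n • φ n := by
  refine .of_norm_bounded hgs fun n ↦ ?_
  rw [norm_smul, Real.norm_of_nonneg (hg₀ n)]
  exact mul_le_of_le_one_right (hg₀ n) (hφ₁ n)

variable {q : ℕ} [NeZero q] {φ : ZMod q → E} {g : ℕ → ℝ}

lemma sum_range_zmod {A : Type*} [AddCommMonoid A] (φ : ZMod q → A) (k : ℕ) :
    ∑ i ∈ Finset.range q, φ ((k + i : ℕ) : ZMod q) = ∑ a, φ a := by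
  rw [← Equiv.sum_comp (Equiv.addLeft (k : ZMod q)) φ]
  refine Finset.sum_nbij' (fun i ↦ (i : ZMod q)) ZMod.val (by simp)
    (fun a _ ↦ Finset.mem_range.2 a.val_lt)
    (fun i hi ↦ ZMod.val_cast_of_lt (Finset.mem_range.1 hi)) (by simp) (by simp)

lemma norm_sum_range_smul_le (hφ : ∑ a, φ a = 0) (hφ₁ : ∀ a, ‖φ a‖ ≤ 1) (hg₀ : ∀ n, 0 ≤ g n)
    (hg : AntitoneOn g (Set.Ici q)) (J : ℕ) :
    ‖∑ n ∈ Finset.range (q * (J + 1)), g n • φ n‖ ≤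
      ∑ n ∈ Finset.range q, g n + q * (g q - g (q * (J + 1))) := by
  induction J with
  | zero =>
    simp only [zero_add, mul_one, sub_self, mul_zero, add_zero]
    refine norm_sum_le_of_le _ fun n _ ↦ ?_
    rw [norm_smul, Real.norm_of_nonneg (hg₀ n)]
    exact mul_le_of_le_one_right (hg₀ n) (hφ₁ n)
  | succ J ih =>
    set N := q * (J + 1) with hN
    have hqN : q ≤ N := Nat.le_mul_of_pos_right _ J.succ_pos
    have hblock : ‖∑ i ∈ Finset.range q, g (N + i) • φ ((N + i : ℕ) : ZMod q)‖ ≤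
        q * (g N - g (N + q)) := by
      refine (norm_sum_smul_le_of_sum_eq_zero ((sum_range_zmod φ N).trans hφ)
        (fun i _ ↦ hφ₁ _) fun i hi ↦ ?_).trans_eq (by rw [Finset.card_range])
      have hi : i < q := Finset.mem_range.1 hi
      have hqi : q ≤ N + i := by lia
      exact ⟨hg hqi (show q ≤ N + q by lia) (by lia), hg hqN hqi (by lia)⟩
    rw [show q * (J + 1 + 1) = N + q by rw [hN]; ring, Finset.sum_range_add]
    refine (norm_add_le _ _).trans ?_
    linarith

lemma norm_tsum_smul_le [CompleteSpace E] (hφ : ∑ a, φ a = 0) (hφ₁ : ∀ a, ‖φ a‖ ≤ 1)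
    (hg₀ : ∀ n, 0 ≤ g n) (hg : AntitoneOn g (Set.Ici q)) (hgs : Summable g) :
    ‖∑' n : ℕ, g n • φ n‖ ≤ ∑ n ∈ Finset.range q, g n + q * g q := by
  have hblocks : Tendsto (fun J : ℕ ↦ q * (J + 1)) atTop atTop :=
    tendsto_atTop_mono (fun J ↦ (Nat.le_succ J).trans (Nat.le_mul_of_pos_left _ (NeZero.pos q)))
      tendsto_id
  refine le_of_tendsto'
    ((summable_smul_zmod hφ₁ hg₀ hgs).hasSum.tendsto_sum_nat.comp hblocks).norm fun J ↦ ?_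
  refine (norm_sum_range_smul_le hφ hφ₁ hg₀ hg J).trans ?_
  gcongr
  linarith [hg₀ (q * (J + 1))]

lemma sum_range_inv_le (q : ℕ) [NeZero q] :
    ∑ n ∈ Finset.range q, ((n : ℝ))⁻¹ ≤ 1 + Real.log q := by
  obtain ⟨k, rfl⟩ : ∃ k, q = k + 1 := Nat.exists_eq_succ_of_ne_zero (NeZero.ne q)
  have hharmonic : ∑ n ∈ Finset.range (k + 1), (n : ℝ)⁻¹ = harmonic k := by
    rw [Finset.sum_range_succ', harmonic]
    push_cast
    simp only [inv_zero, add_zero]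
  rw [hharmonic]
  refine (harmonic_le_one_add_log k).trans ?_
  rcases k.eq_zero_or_pos with rfl | hk
  · simp
  · gcongr
    exact k.le_succ

lemma norm_tsum_smul_le_of_le_inv [CompleteSpace E] (hφ : ∑ a, φ a = 0) (hφ₁ : ∀ a, ‖φ a‖ ≤ 1)
    (hg₀ : ∀ n, 0 ≤ g n) (hg : AntitoneOn g (Set.Ici q)) (hgs : Summable g) {C : ℝ}
    (hC : ∀ n ≤ q, g n ≤ C * (n : ℝ)⁻¹) :
    ‖∑' n : ℕ, g n • φ n‖ ≤ C * (2 + Real.log q) := by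
  have hq : (0 : ℝ) < q := Nat.cast_pos.2 (NeZero.pos q)
  have hlast : q * g q ≤ C :=
    (mul_le_mul_of_nonneg_left (hC q le_rfl) hq.le).trans_eq (by field)
  have hC₀ : 0 ≤ C := (mul_nonneg hq.le (hg₀ q)).trans hlast
  calc ‖∑' n : ℕ, g n • φ n‖
      ≤ ∑ n ∈ Finset.range q, g n + q * g q := norm_tsum_smul_le hφ hφ₁ hg₀ hg hgs
    _ ≤ ∑ n ∈ Finset.range q, C * (n : ℝ)⁻¹ + C := by
        gcongr with n hn
        exact hC n (Finset.mem_range.1 hn).le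
    _ ≤ C * (1 + Real.log q) + C := by
        rw [← Finset.mul_sum]
        gcongr
        exact sum_range_inv_le q
    _ = C * (2 + Real.log q) := by ring

end PartialSummation

section LFunctionBounds

lemma antitoneOn_rpow_neg_sub_rpow_neg {a b : ℝ} (ha : 1 ≤ a) (hab : a ≤ b) :
    AntitoneOn (fun x : ℝ ↦ x ^ (-a) - x ^ (-b)) (Set.Ici (Real.exp 1)) := by
  have hderiv : ∀ x ∈ Set.Ici (Real.exp 1), HasDerivAt (fun x : ℝ ↦ x ^ (-a) - x ^ (-b))
      (-a * x ^ (-a - 1) - -b * x ^ (-b - 1)) x := fun x hx ↦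
    have hx : x ≠ 0 := ((Real.exp_pos 1).trans_le hx).ne'
    (Real.hasDerivAt_rpow_const (.inl hx)).sub (Real.hasDerivAt_rpow_const (.inl hx))
  refine antitoneOn_of_hasDerivWithinAt_nonpos (convex_Ici _)
    (fun x hx ↦ (hderiv x hx).continuousAt.continuousWithinAt)
    (fun x hx ↦ (hderiv x (interior_subset hx)).hasDerivWithinAt) fun x hx ↦ ?_
  have hx : Real.exp 1 ≤ x := interior_subset hx
  have hx₀ : 0 < x := (Real.exp_pos 1).trans_le hx
  have hpow : 1 + (b - a) ≤ x ^ (b - a) := calc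
    1 + (b - a) ≤ Real.exp 1 ^ (b - a) := by
      rw [Real.exp_one_rpow, add_comm]
      exact Real.add_one_le_exp _
    _ ≤ x ^ (b - a) := Real.rpow_le_rpow (Real.exp_pos 1).le hx (sub_nonneg.2 hab)
  have hb : b ≤ a * x ^ (b - a) := by nlinarith
  have hsplit : x ^ (-a - 1) = x ^ (b - a) * x ^ (-b - 1) := by
    rw [← Real.rpow_add hx₀]
    ring_nf
  rw [hsplit]
  nlinarith [Real.rpow_pos_of_pos hx₀ (-b - 1)]

lemma rpow_neg_le_inv (n : ℕ) {a : ℝ} (ha : 1 ≤ a) : (n : ℝ) ^ (-a) ≤ (n : ℝ)⁻¹ := by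
  rcases n.eq_zero_or_pos with rfl | hn
  · simp [Real.zero_rpow (by linarith : -a ≠ 0)]
  · rw [← Real.rpow_neg_one]
    exact Real.rpow_le_rpow_of_exponent_le (mod_cast hn) (by linarith)

lemma rpow_neg_sub_rpow_neg_nonneg (n : ℕ) {a b : ℝ} (ha : 1 ≤ a) (hab : a ≤ b) :
    0 ≤ (n : ℝ) ^ (-a) - (n : ℝ) ^ (-b) := by
  rcases n.eq_zero_or_pos with rfl | hn
  · simp [Real.zero_rpow (by linarith : -a ≠ 0), Real.zero_rpow (by linarith : -b ≠ 0)]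
  · exact sub_nonneg.2 (Real.rpow_le_rpow_of_exponent_le (mod_cast hn) (by linarith))

lemma rpow_neg_sub_rpow_neg_le (n : ℕ) {a b : ℝ} (ha : 1 ≤ a) (hab : a ≤ b) :
    (n : ℝ) ^ (-a) - (n : ℝ) ^ (-b) ≤ (b - a) * Real.log n * (n : ℝ)⁻¹ := by
  rcases n.eq_zero_or_pos with rfl | hn
  · simp [Real.zero_rpow (by linarith : -a ≠ 0), Real.zero_rpow (by linarith : -b ≠ 0)]
  have hn₀ : (0 : ℝ) < n := Nat.cast_pos.2 hn
  have hsplit : (n : ℝ) ^ (-b) = (n : ℝ) ^ (-a) * (n : ℝ) ^ (-(b - a)) := by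
    rw [← Real.rpow_add hn₀]
    ring_nf
  have hexp : 1 - (n : ℝ) ^ (-(b - a)) ≤ (b - a) * Real.log n := by
    rw [Real.rpow_def_of_pos hn₀]
    linarith [Real.add_one_le_exp (Real.log n * -(b - a))]
  calc (n : ℝ) ^ (-a) - (n : ℝ) ^ (-b)
      = (n : ℝ) ^ (-a) * (1 - (n : ℝ) ^ (-(b - a))) := by rw [hsplit]; ring
    _ ≤ (n : ℝ) ^ (-a) * ((b - a) * Real.log n) := by gcongr
    _ ≤ (n : ℝ)⁻¹ * ((b - a) * Real.log n) :=
        mul_le_mul_of_nonneg_right (rpow_neg_le_inv n ha)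
          (mul_nonneg (sub_nonneg.2 hab) (Real.log_natCast_nonneg n))
    _ = (b - a) * Real.log n * (n : ℝ)⁻¹ := mul_comm _ _

variable {q : ℕ} [NeZero q] {χ : DirichletCharacter ℂ q}

lemma LFunction_eq_tsum_smul (χ : DirichletCharacter ℂ q) {s : ℝ} (hs : 1 < s) :
    χ.LFunction s = ∑' n : ℕ, ((n : ℝ) ^ (-s)) • χ n := by
  rw [DirichletCharacter.LFunction_eq_LSeries _ (by simpa using hs), LSeries]
  refine tsum_congr fun n ↦ ?_
  rw [LSeries.term_of_ne_zero' (mod_cast (zero_lt_one.trans hs).ne'), Complex.real_smul,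
    Complex.ofReal_cpow n.cast_nonneg, Complex.ofReal_neg, Complex.cpow_neg,
    Complex.ofReal_natCast, div_eq_inv_mul]

lemma norm_LFunction_le (hχ : χ ≠ 1) {s : ℝ} (hs : 1 < s) :
    ‖χ.LFunction s‖ ≤ 2 + Real.log q := by
  rw [LFunction_eq_tsum_smul χ hs, ← one_mul (2 + Real.log q)]
  refine norm_tsum_smul_le_of_le_inv (MulChar.sum_eq_zero_of_ne_one hχ) χ.norm_le_one
    (fun n ↦ by positivity) (fun m hm n _ hmn ↦ ?_) (Real.summable_nat_rpow.2 (by linarith))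
    fun n _ ↦ (rpow_neg_le_inv n hs.le).trans_eq (one_mul _).symm
  exact Real.rpow_le_rpow_of_nonpos (Nat.cast_pos.2 ((NeZero.pos q).trans_le hm))
    (Nat.cast_le.2 hmn) (by linarith)

lemma norm_LFunction_sub_le (hq : 3 ≤ q) (hχ : χ ≠ 1) {a b : ℝ} (ha : 1 < a) (hab : a ≤ b) :
    ‖χ.LFunction a - χ.LFunction b‖ ≤ (b - a) * Real.log q * (2 + Real.log q) := by
  have hb : 1 < b := ha.trans_le hab
  have hsum : ∀ {s : ℝ}, 1 < s → Summable fun n : ℕ ↦ (n : ℝ) ^ (-s) := fun hs ↦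
    Real.summable_nat_rpow.2 (by linarith)
  have hsum' : ∀ {s : ℝ}, 1 < s → Summable fun n : ℕ ↦ ((n : ℝ) ^ (-s)) • χ n := fun hs ↦
    summable_smul_zmod χ.norm_le_one (fun n ↦ by positivity) (hsum hs)
  rw [LFunction_eq_tsum_smul χ ha, LFunction_eq_tsum_smul χ hb, ← (hsum' ha).tsum_sub (hsum' hb)]
  simp only [← sub_smul]
  refine norm_tsum_smul_le_of_le_inv (MulChar.sum_eq_zero_of_ne_one hχ) χ.norm_le_one
    (rpow_neg_sub_rpow_neg_nonneg · ha.le hab) (fun m hm n hn hmn ↦ ?_)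
    ((hsum ha).sub (hsum hb)) fun n hn ↦ ?_
  · have hexp : ∀ n ∈ Set.Ici q, (n : ℝ) ∈ Set.Ici (Real.exp 1) := fun n hn ↦
      (Real.exp_one_lt_d9.le.trans (by norm_num)).trans (Nat.ofNat_le_cast.2 (hq.trans hn))
    exact antitoneOn_rpow_neg_sub_rpow_neg ha.le hab (hexp m hm) (hexp n hn) (Nat.cast_le.2 hmn)
  · refine (rpow_neg_sub_rpow_neg_le n ha.le hab).trans ?_
    rcases n.eq_zero_or_pos with rfl | hn₀
    · simp
    · gcongr

lemma norm_LFunction_one_sub_le (hq : 3 ≤ q) (hχ : χ ≠ 1) {b : ℝ} (hb : 1 < b) :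
    ‖χ.LFunction 1 - χ.LFunction b‖ ≤ (b - 1) * Real.log q * (2 + Real.log q) := by
  have hcont : Continuous fun a : ℝ ↦ ‖χ.LFunction (a : ℂ) - χ.LFunction b‖ := by
    have := (DirichletCharacter.differentiable_LFunction hχ).continuous
    fun_prop
  have hbound : Continuous fun a : ℝ ↦ (b - a) * Real.log q * (2 + Real.log q) := by fun_prop
  have hle := le_of_tendsto_of_tendsto (hcont.tendsto 1 |>.mono_left nhdsWithin_le_nhds)
    (hbound.tendsto 1 |>.mono_left nhdsWithin_le_nhds) (b := 𝓝[>] 1) <| by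
      filter_upwards [Ioc_mem_nhdsGT hb] with a ha
      exact norm_LFunction_sub_le hq hχ ha.1 ha.2
  rwa [Complex.ofReal_one] at hle

end LFunctionBounds

section ExceptionalCharacters

open Classical in
/-- The quadratic characters `χ` mod `q` for which `L(1, χ) < exp (-T)`. As `L(1, χ)` is real, its
real part stands for it. -/
def exceptionalChars (q : ℕ) [NeZero q] (T : ℝ) : Finset (DirichletCharacter ℂ q) :=
  (quadChars q).filter fun χ ↦ χ ≠ 1 ∧ (χ.LFunction 1).re < Real.exp (-T)

variable {q d : ℕ} [NeZero q] [NeZero d] {s T : ℝ} {χ : DirichletCharacter ℂ q}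

lemma mem_exceptionalChars : χ ∈ exceptionalChars q T ↔
    χ ∈ quadChars q ∧ χ ≠ 1 ∧ (χ.LFunction 1).re < Real.exp (-T) := by
  classical
  rw [exceptionalChars, Finset.mem_filter]

lemma exceptionalChars_subset {T' : ℝ} (h : T ≤ T') :
    exceptionalChars q T' ⊆ exceptionalChars q T := fun χ hχ ↦ by
  rw [mem_exceptionalChars] at *
  exact ⟨hχ.1, hχ.2.1, hχ.2.2.trans_le (Real.exp_le_exp.2 (neg_le_neg h))⟩

lemma logL_le_log (hs : 1 < s) (hχ : χ ∈ quadChars q) (hχ₁ : χ ≠ 1) :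
    logL s χ ≤ Real.log (2 + Real.log q) := by
  have hpos : 0 < 2 + Real.log q := by linarith [Real.log_natCast_nonneg q]
  rw [Real.le_log_iff_exp_le hpos]
  simpa [LFunction_eq_exp_logL hs hχ, Complex.norm_real, abs_of_pos (Real.exp_pos _)]
    using norm_LFunction_le hχ₁ hs

lemma expect_logL_sq_le (hd : d ∣ q) (hs : 1 < s) {M : ℝ} (hM : Real.log (1 + 1 / (s - 1)) ≤ M) :
    𝔼 χ ∈ quadChars q, logL s χ ^ 2 ≤
      2 * M * (M / (quadChars d).card + Real.log (2 + Real.log d)) :=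
  (expect_logL_sq_le_of_dvd hd hs).trans <|
    expect_sq_le_of_expect_nonneg one_mem_quadChars
      (Real.log_nonneg (by linarith [Real.log_natCast_nonneg d]))
      (fun χ _ ↦ (abs_logL_le hs χ).trans ((tsum_logZetaCoeff_le hs).trans hM))
      (fun _ hχ hχ₁ ↦ logL_le_log hs hχ hχ₁) (expect_logL_nonneg hs)

lemma logL_le_of_mem_exceptionalChars (hq : 3 ≤ q) (hs : 1 < s) (hT : 2 * Real.log 2 ≤ T)
    (hsT : (s - 1) * Real.log q * (2 + Real.log q) ≤ Real.exp (-T))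
    (hχ : χ ∈ exceptionalChars q T) : logL s χ ≤ -(T / 2) := by
  obtain ⟨hχ, hχ₁, hsmall⟩ := mem_exceptionalChars.1 hχ
  have hdiff := (Complex.abs_re_le_norm _).trans (norm_LFunction_one_sub_le hq hχ₁ hs)
  rw [LFunction_eq_exp_logL hs hχ, Complex.sub_re, Complex.ofReal_re] at hdiff
  have hexp : Real.exp (logL s χ) ≤ Real.exp (Real.log 2 - T) := by
    rw [sub_eq_add_neg, Real.exp_add, Real.exp_log two_pos]
    linarith [(abs_le.1 hdiff).1]
  linarith [Real.exp_le_exp.1 hexp]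

lemma card_exceptionalChars_mul_sq_le (hq : 3 ≤ q) (hd : d ∣ q) (hs : 1 < s)
    (hT : 2 * Real.log 2 ≤ T) (hsT : (s - 1) * Real.log q * (2 + Real.log q) ≤ Real.exp (-T))
    {M : ℝ} (hM : Real.log (1 + 1 / (s - 1)) ≤ M) :
    (exceptionalChars q T).card * T ^ 2 ≤
      8 * M * (M / (quadChars d).card + Real.log (2 + Real.log d)) * (quadChars q).card := by
  have hT₀ : 0 ≤ T := (mul_nonneg two_pos.le (Real.log_nonneg one_le_two)).trans hT
  have hmean := expect_logL_sq_le hd hs hM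
  rw [Finset.expect_eq_sum_div_card, div_le_iff₀ card_quadChars_pos] at hmean
  have hchebyshev : (exceptionalChars q T).card * (T / 2) ^ 2 ≤ ∑ χ ∈ quadChars q, logL s χ ^ 2 :=
    calc ((exceptionalChars q T).card : ℝ) * (T / 2) ^ 2
        = ∑ χ ∈ exceptionalChars q T, (T / 2) ^ 2 := by rw [Finset.sum_const, nsmul_eq_mul]
      _ ≤ ∑ χ ∈ exceptionalChars q T, logL s χ ^ 2 := Finset.sum_le_sum fun χ hχ ↦ by
          nlinarith [logL_le_of_mem_exceptionalChars hq hs hT hsT hχ]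
      _ ≤ ∑ χ ∈ quadChars q, logL s χ ^ 2 := Finset.sum_le_sum_of_subset_of_nonneg
          (fun χ hχ ↦ (mem_exceptionalChars.1 hχ).1) fun _ _ _ ↦ sq_nonneg _
  linarith

/- We take `s = 1 + (log q) ^ (-3)`, for which `L(s, χ)` and `L(1, χ)` are `O (1 / log q)` apart
while `log ζ(s)` is only `O (log log q)`. -/
lemma card_exceptionalChars_mul_sq_le_log_log {ℓ : ℝ} (hd : d ∣ q)
    (hℓ : Real.log (Real.log q) = ℓ) (hℓ₁ : 1 ≤ ℓ) (hT : 2 * Real.log 2 ≤ T)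
    (hTℓ : Real.log 3 + T ≤ ℓ) :
    (exceptionalChars q T).card * T ^ 2 ≤
      32 * ℓ * (4 * ℓ / (quadChars d).card + Real.log (2 + Real.log d)) * (quadChars q).card := by
  set x := Real.log q with hx
  have hx₀ : 0 < x := (Real.log_natCast_nonneg q).lt_of_ne' fun h ↦ by
    rw [hx.trans h, Real.log_zero] at hℓ
    linarith
  have hxℓ : x = Real.exp ℓ := by rw [← hℓ, Real.exp_log hx₀]
  have hx₂ : 2 ≤ x := by linarith [Real.add_one_le_exp ℓ]
  have hq₃ : 3 ≤ q := by
    have := (Real.le_log_iff_exp_le (Nat.cast_pos.2 (NeZero.pos q))).1 hx₂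
    exact_mod_cast (by linarith [Real.add_one_le_exp 2] : (3 : ℝ) ≤ q)
  have hM : Real.log (1 + 1 / (1 + (x ^ 3)⁻¹ - 1)) ≤ 4 * ℓ := by
    rw [add_sub_cancel_left, one_div, inv_inv, ← hℓ,
      show 4 * Real.log x = Real.log (x ^ 4) by rw [Real.log_pow]; norm_num]
    gcongr
    nlinarith [one_le_pow₀ (one_le_two.trans hx₂) (n := 3)]
  have hsT : (1 + (x ^ 3)⁻¹ - 1) * x * (2 + x) ≤ Real.exp (-T) := calc
    (1 + (x ^ 3)⁻¹ - 1) * x * (2 + x) ≤ (1 + (x ^ 3)⁻¹ - 1) * x * (3 * x) := by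
      rw [add_sub_cancel_left]
      gcongr
      linarith
    _ = 3 * Real.exp (-ℓ) := by
      rw [Real.exp_neg, ← hxℓ]
      field
    _ ≤ Real.exp (-T) := by
      rw [← Real.exp_log three_pos, ← Real.exp_add]
      exact Real.exp_le_exp.2 (by linarith)
  have hs : 1 < 1 + (x ^ 3)⁻¹ := lt_add_of_pos_right 1 (by positivity)
  exact (card_exceptionalChars_mul_sq_le hq₃ hd hs hT hsT hM).trans_eq (by ring)

/-- `q` has a divisor `d` that is tiny compared with `q` but carries at least `log log q` quadratic
characters. The exponent `9` is only one convenient choice: any bound on `log d` polynomial in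
`log log q` would do. -/
def HasRichDivisor (q : ℕ) : Prop :=
  ∃ (d : ℕ) (_ : NeZero d), d ∣ q ∧ Real.log (Real.log q) ≤ (quadChars d).card ∧
    Real.log d ≤ Real.log (Real.log q) ^ 9

lemma HasRichDivisor.card_exceptionalChars_mul_sq_le {ℓ : ℝ} (hq : HasRichDivisor q)
    (hℓ : Real.log (Real.log q) = ℓ) (hℓ₁ : 1 ≤ ℓ) (hT : 2 * Real.log 2 ≤ T)
    (hTℓ : Real.log 3 + T ≤ ℓ) :
    (exceptionalChars q T).card * T ^ 2 ≤
      32 * ℓ * (4 + Real.log (2 + ℓ ^ 9)) * (quadChars q).card := by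
  obtain ⟨d, _, hdq, hcard, hlogd⟩ := hq
  rw [hℓ] at hcard hlogd
  refine (card_exceptionalChars_mul_sq_le_log_log hdq hℓ hℓ₁ hT hTℓ).trans ?_
  have hratio : 4 * ℓ / (quadChars d).card ≤ 4 := by
    rw [div_le_iff₀ card_quadChars_pos]
    gcongr
  have hlog : Real.log (2 + Real.log d) ≤ Real.log (2 + ℓ ^ 9) :=
    Real.log_le_log (by linarith [Real.log_natCast_nonneg d]) (by linarith)
  exact mul_le_mul_of_nonneg_right (mul_le_mul_of_nonneg_left (add_le_add hratio hlog)
    (by linarith)) (Nat.cast_nonneg _)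

lemma isLittleO_four_add_log_two_add_pow_rpow {r : ℝ} (hr : 0 < r) :
    (fun ℓ : ℝ ↦ 4 + Real.log (2 + ℓ ^ 9)) =o[atTop] fun ℓ ↦ ℓ ^ r := by
  refine Asymptotics.IsBigO.trans_isLittleO (.of_bound 14 ?_)
    (isLittleO_log_rpow_atTop hr)
  filter_upwards [eventually_ge_atTop (Real.exp 1)] with ℓ hℓ
  have hℓ₂ : 2 ≤ ℓ := by linarith [Real.add_one_le_exp 1]
  have hlogℓ : 1 ≤ Real.log ℓ := (Real.le_log_iff_exp_le (by linarith)).2 hℓ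
  have hpow : Real.log (2 + ℓ ^ 9) ≤ 10 * Real.log ℓ := by
    rw [show 10 * Real.log ℓ = Real.log (ℓ ^ 10) by rw [Real.log_pow]; norm_num]
    have hℓ₉ : 2 ≤ ℓ ^ 9 := hℓ₂.trans (le_self_pow₀ (one_le_two.trans hℓ₂) (by norm_num))
    exact Real.log_le_log (by linarith) (by nlinarith)
  have hlog₀ : 0 ≤ Real.log (2 + ℓ ^ 9) :=
    Real.log_nonneg (by linarith [pow_nonneg (two_pos.le.trans hℓ₂) 9])
  rw [Real.norm_of_nonneg (by positivity), Real.norm_of_nonneg (by positivity)]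
  linarith

lemma eventually_log_growth_bounds {e c η : ℝ} (he : 1 / 2 < e) (he₁ : e < 1) (hc : 0 < c)
    (hη : 0 < η) : ∀ᶠ ℓ : ℝ in atTop, 2 * Real.log 2 ≤ c * ℓ ^ e ∧ Real.log 3 + c * ℓ ^ e ≤ ℓ ∧
      32 * ℓ * (4 + Real.log (2 + ℓ ^ 9)) ≤ η * (c * ℓ ^ e) ^ 2 := by
  have hlarge : Tendsto (fun ℓ : ℝ ↦ c * ℓ ^ e) atTop atTop :=
    (tendsto_rpow_atTop (by linarith)).const_mul_atTop hc
  have hratio : Tendsto (fun ℓ : ℝ ↦ ℓ ^ (1 - e)) atTop atTop :=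
    tendsto_rpow_atTop (sub_pos.2 he₁)
  have hlog := isLittleO_four_add_log_two_add_pow_rpow (r := 2 * e - 1) (by linarith)
  filter_upwards [hlarge.eventually_ge_atTop (2 * Real.log 2),
    hratio.eventually_ge_atTop (Real.log 3 + c), hlog.bound (c := η * c ^ 2 / 32) (by positivity),
    eventually_ge_atTop 1] with ℓ h₁ h₂ h₃ hℓ₁
  have hℓ : 0 < ℓ := one_pos.trans_le hℓ₁
  refine ⟨h₁, ?_, ?_⟩
  · have hℓe : 1 ≤ ℓ ^ e := Real.one_le_rpow hℓ₁ (by linarith)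
    calc Real.log 3 + c * ℓ ^ e
        ≤ ℓ ^ e * (Real.log 3 + c) := by nlinarith [Real.log_nonneg (by norm_num : (1 : ℝ) ≤ 3)]
      _ ≤ ℓ ^ e * ℓ ^ (1 - e) := by gcongr
      _ = ℓ := by rw [← Real.rpow_add hℓ, add_sub_cancel, Real.rpow_one]
  · rw [Real.norm_of_nonneg (by positivity : 0 ≤ ℓ ^ (2 * e - 1))] at h₃
    have hsplit : ℓ * ℓ ^ (2 * e - 1) = (ℓ ^ e) ^ 2 := by
      rw [← Real.rpow_one_add' hℓ.le (by linarith), ← Real.rpow_mul_natCast hℓ.le]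
      ring_nf
    calc 32 * ℓ * (4 + Real.log (2 + ℓ ^ 9))
        ≤ 32 * ℓ * (η * c ^ 2 / 32 * ℓ ^ (2 * e - 1)) := by
          gcongr
          exact (le_abs_self _).trans h₃
      _ = η * c ^ 2 * (ℓ * ℓ ^ (2 * e - 1)) := by ring
      _ = η * (c * ℓ ^ e) ^ 2 := by rw [hsplit]; ring

lemma tendsto_log_log_natCast_atTop :
    Tendsto (fun n : ℕ ↦ Real.log (Real.log n)) atTop atTop :=
  Real.tendsto_log_atTop.comp (Real.tendsto_log_atTop.comp tendsto_natCast_atTop_atTop)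

lemma eventually_card_exceptionalChars_le {e c η : ℝ} (he : 1 / 2 < e) (hc : 0 < c) (hη : 0 < η) :
    ∀ᶠ q : ℕ in atTop, HasRichDivisor q → ∀ [NeZero q],
      ((exceptionalChars q (c * Real.log (Real.log q) ^ e)).card : ℝ) ≤
        η * (quadChars q).card := by
  have hgrowth := tendsto_log_log_natCast_atTop.eventually (eventually_log_growth_bounds
    (lt_min he (by norm_num : (1 / 2 : ℝ) < 3 / 4)) (min_lt_of_right_lt (by norm_num)) hc hη)
  filter_upwards [hgrowth, tendsto_log_log_natCast_atTop.eventually_ge_atTop 1]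
    with q ⟨h₁, h₂, h₃⟩ hℓ hq _
  set ℓ := Real.log (Real.log q)
  set T := c * ℓ ^ min e (3 / 4)
  have hT : 0 < T := by positivity
  have hsubset : exceptionalChars q (c * ℓ ^ e) ⊆ exceptionalChars q T :=
    exceptionalChars_subset (mul_le_mul_of_nonneg_left
      (Real.rpow_le_rpow_of_exponent_le hℓ (min_le_left ..)) hc.le)
  have hcard := (hq.card_exceptionalChars_mul_sq_le rfl hℓ h₁ h₂).trans
    (mul_le_mul_of_nonneg_right h₃ (Nat.cast_nonneg _))
  calc ((exceptionalChars q (c * ℓ ^ e)).card : ℝ)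
      ≤ (exceptionalChars q T).card := Nat.cast_le.2 (Finset.card_le_card hsubset)
    _ ≤ η * (quadChars q).card := le_of_mul_le_mul_right (by linarith) (pow_pos hT 2)

lemma one_sub_mul_card_le_of_card_exceptionalChars_le {η : ℝ} (hη : 0 ≤ η)
    (h : ((exceptionalChars q T).card : ℝ) ≤ η / 2 * (quadChars q).card) :
    (1 - η) * (Nat.card {χ : DirichletCharacter ℂ q // χ ^ 2 = 1 ∧ χ ≠ 1} : ℝ) ≤
      (Nat.card {χ : DirichletCharacter ℂ q //
        χ ^ 2 = 1 ∧ χ ≠ 1 ∧ Real.exp (-T) ≤ (χ.LFunction 1).re} : ℝ) := by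
  classical
  set A := (quadChars q).erase 1 with hA
  have hsub : exceptionalChars q T ⊆ A := fun χ hχ ↦ by
    obtain ⟨hχ, hχ₁, -⟩ := mem_exceptionalChars.1 hχ
    exact Finset.mem_erase.2 ⟨hχ₁, hχ⟩
  rw [Nat.subtype_card A (by simp [hA, mem_quadChars, and_comm]),
    Nat.subtype_card (A \ exceptionalChars q T) (by
      simp [hA, mem_quadChars, mem_exceptionalChars]; tauto),
    Finset.cast_card_sdiff hsub]
  have hcard : (A.card : ℝ) + 1 = (quadChars q).card :=
    mod_cast Finset.card_erase_add_one one_mem_quadChars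
  rcases A.eq_empty_or_nonempty with hA₀ | hA₀
  · have : exceptionalChars q T = ∅ := Finset.subset_empty.1 (hA₀ ▸ hsub)
    simp [hA₀, this]
  · have : (1 : ℝ) ≤ A.card := Nat.one_le_cast.2 hA₀.card_pos
    rw [← hcard] at h
    linarith [mul_nonneg hη (sub_nonneg.2 this)]

end ExceptionalCharacters

section RichDivisors

open Function

lemma two_pow_le_card_quadChars_prod {ι : Type*} [Fintype ι] {a : ι → ℕ}
    (hcoprime : Pairwise (Nat.Coprime on a)) (ha : ∀ i, 2 < a i) [NeZero (∏ i, a i)] :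
    2 ^ Fintype.card ι ≤ (quadChars (∏ i, a i)).card := by
  classical
  let e : DirichletCharacter ℂ (∏ i, a i) ≃* Π i, (ZMod (a i))ˣ :=
    (DirichletCharacter.mulEquiv_units ℂ _).some.trans <|
      (Units.mapEquiv (ZMod.prodEquivPi a hcoprime).toMulEquiv).trans MulEquiv.piUnits
  let f (b : ι → Bool) : DirichletCharacter ℂ (∏ i, a i) := e.symm fun i ↦ if b i then 1 else -1
  have hf : Injective f := fun b b' h ↦ funext fun i ↦ by
    have : Fact (2 < a i) := ⟨ha i⟩
    have hne : (-1 : (ZMod (a i))ˣ) ≠ 1 := fun h' ↦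
      ZMod.neg_one_ne_one (by simpa using congrArg Units.val h')
    have hsign : Injective fun c : Bool ↦ if c then (1 : (ZMod (a i))ˣ) else -1 :=
      Bool.injective_iff.2 (by simpa only [Bool.false_eq_true, if_false, if_true] using hne)
    exact hsign (congrFun (e.symm.injective h) i)
  have hmem (b : ι → Bool) : f b ∈ quadChars (∏ i, a i) := by
    rw [mem_quadChars, ← map_pow, MulEquiv.map_eq_one_iff]
    funext i
    simp only [Pi.pow_apply, Pi.one_apply]
    split <;> simp
  calc 2 ^ Fintype.card ι = (Finset.univ : Finset (ι → Bool)).card := by simp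
    _ ≤ (quadChars (∏ i, a i)).card :=
      Finset.card_le_card_of_injOn f (fun b _ ↦ hmem b) hf.injOn

lemma exists_dvd_two_pow_le_card_quadChars {n : ℕ} {S : Finset ℕ} {y : ℝ}
    (hcoprime : (S : Set ℕ).Pairwise Nat.Coprime) (h₂ : ∀ p ∈ S, 2 < p) (hdvd : ∀ p ∈ S, p ∣ n)
    (hy : ∀ p ∈ S, (p : ℝ) ≤ y) :
    ∃ (d : ℕ) (_ : NeZero d), d ∣ n ∧ 2 ^ S.card ≤ (quadChars d).card ∧
      Real.log d ≤ S.card * Real.log y := by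
  have hpos (p : S) : 0 < (p : ℕ) := by linarith [h₂ p p.2]
  have hne : NeZero (∏ p : S, (p : ℕ)) := ⟨Finset.prod_ne_zero_iff.2 fun p _ ↦ (hpos p).ne'⟩
  have hcoprime' : Pairwise (Nat.Coprime on ((↑) : S → ℕ)) := fun p r hpr ↦
    hcoprime p.2 r.2 (Subtype.coe_ne_coe.2 hpr)
  refine ⟨∏ p : S, (p : ℕ), hne, ?_, ?_, ?_⟩
  · exact Fintype.prod_dvd_of_isRelPrime
      (fun p r hpr ↦ Nat.coprime_iff_isRelPrime.1 (hcoprime' hpr)) fun p ↦ hdvd p p.2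
  · simpa using two_pow_le_card_quadChars_prod hcoprime' fun p ↦ h₂ p p.2
  · rw [Nat.cast_prod, Real.log_prod fun p _ ↦ Nat.cast_ne_zero.2 (hpos p).ne', ← nsmul_eq_mul,
      ← Fintype.card_coe, ← Finset.card_univ]
    exact Finset.sum_le_card_nsmul _ _ _ fun p _ ↦
      Real.log_le_log (Nat.cast_pos.2 (hpos p)) (hy p p.2)

end RichDivisors

section PrimeReciprocals

lemma harmonic_le_prod_primesBelow (N : ℕ) :
    (harmonic N : ℝ) ≤ ∏ p ∈ (N + 1).primesBelow, (1 - (p : ℝ)⁻¹)⁻¹ := by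
  classical
  let f : ℕ →* ℝ := invMonoidHom.comp (Nat.castRingHom ℝ : ℕ →* ℝ)
  have hf {p : ℕ} (hp : p.Prime) : ‖f p‖ < 1 := by
    simpa [f] using inv_lt_one_of_one_lt₀ (Nat.one_lt_cast.2 hp.one_lt : (1 : ℝ) < p)
  have hsmooth : ∀ i ∈ Finset.Icc 1 N, i ∈ (N + 1).smoothNumbers := fun i hi ↦ by
    rw [Finset.mem_Icc] at hi
    exact Nat.mem_smoothNumbers_of_lt hi.1 (Nat.lt_succ_of_le hi.2)
  calc (harmonic N : ℝ) = ∑ i ∈ Finset.Icc 1 N, f i := by simp [harmonic_eq_sum_Icc, f]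
    _ = ∑ m ∈ (Finset.Icc 1 N).subtype (· ∈ (N + 1).smoothNumbers), f m :=
      (Finset.sum_subtype_of_mem f hsmooth).symm
    _ ≤ ∏ p ∈ (N + 1).primesBelow, (1 - f p)⁻¹ :=
      sum_le_hasSum _ (fun m _ ↦ inv_nonneg.2 (Nat.cast_nonneg _))
        (EulerProduct.summable_and_hasSum_smoothNumbers_prod_primesBelow_geometric hf (N + 1)).2

lemma log_log_le_two_mul_sum_primesBelow_inv (N : ℕ) :
    Real.log (Real.log N) ≤ 2 * ∑ p ∈ N.primesBelow, (p : ℝ)⁻¹ := by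
  rcases N with _ | _ | N
  · simp
  · simp
  have hinv {p : ℕ} (hp : p ∈ (N + 1 + 1).primesBelow) : (p : ℝ)⁻¹ ≤ 1 / 2 := by
    rw [one_div]
    gcongr
    exact_mod_cast (Nat.prime_of_mem_primesBelow hp).two_le
  have hpos : ∀ p ∈ (N + 1 + 1).primesBelow, 0 < (1 - (p : ℝ)⁻¹)⁻¹ := fun p hp ↦
    inv_pos.2 (by linarith [hinv hp])
  calc Real.log (Real.log (N + 1 + 1 : ℕ))
      ≤ Real.log (∏ p ∈ (N + 1 + 1).primesBelow, (1 - (p : ℝ)⁻¹)⁻¹) :=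
        Real.log_le_log (Real.log_pos (Nat.one_lt_cast.2 (by lia)))
          ((log_add_one_le_harmonic _).trans (harmonic_le_prod_primesBelow _))
    _ = ∑ p ∈ (N + 1 + 1).primesBelow, Real.log (1 - (p : ℝ)⁻¹)⁻¹ :=
        Real.log_prod fun p hp ↦ (hpos p hp).ne'
    _ ≤ ∑ p ∈ (N + 1 + 1).primesBelow, 2 * (p : ℝ)⁻¹ := Finset.sum_le_sum fun p hp ↦ by
        refine (Real.log_le_sub_one_of_pos (hpos p hp)).trans ?_
        have hp₀ : (0 : ℝ) ≤ (p : ℝ)⁻¹ := inv_nonneg.2 (Nat.cast_nonneg p)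
        rw [sub_le_iff_le_add, inv_le_iff_one_le_mul₀ (inv_pos.1 (hpos p hp))]
        nlinarith [hinv hp]
    _ = 2 * ∑ p ∈ (N + 1 + 1).primesBelow, (p : ℝ)⁻¹ := (Finset.mul_sum ..).symm

end PrimeReciprocals

section Turan

open Finset

/-- The number of elements of `P` dividing `n`; for a set of primes, the truncated `ω(n)` of
Turán's method. -/
def divCount (P : Finset ℕ) (n : ℕ) : ℝ := ((P.filter (· ∣ n)).card : ℝ)

variable {P : Finset ℕ} {N : ℕ}

lemma divCount_eq_sum (P : Finset ℕ) (n : ℕ) :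
    divCount P n = ∑ p ∈ P, if p ∣ n then 1 else 0 := by
  rw [divCount, Finset.natCast_card_filter]

lemma sum_Icc_ite_dvd (m N : ℕ) :
    ∑ n ∈ Icc 1 N, (if m ∣ n then (1 : ℝ) else 0) = (N / m : ℕ) := by
  rw [← Finset.natCast_card_filter]
  exact congrArg _ (Nat.Ioc_filter_dvd_card_eq_div N m)

lemma mul_sum_inv_sub_card_le_sum_divCount (P : Finset ℕ) (N : ℕ) :
    N * ∑ p ∈ P, (p : ℝ)⁻¹ - P.card ≤ ∑ n ∈ Icc 1 N, divCount P n := by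
  simp_rw [divCount_eq_sum]
  rw [sum_comm, mul_sum, card_eq_sum_ones, Nat.cast_sum, ← sum_sub_distrib]
  refine sum_le_sum fun p _ ↦ ?_
  rw [sum_Icc_ite_dvd, Nat.cast_one, ← div_eq_mul_inv, sub_le_iff_le_add,
    ← Nat.floor_div_eq_div (K := ℝ)]
  exact (Nat.lt_floor_add_one _).le

lemma sum_Icc_ite_dvd_mul_ite_dvd_le {p r : ℕ} (h : p ≠ r → Nat.Coprime p r) (N : ℕ) :
    ∑ n ∈ Icc 1 N, (if p ∣ n then (1 : ℝ) else 0) * (if r ∣ n then 1 else 0) ≤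
      N * ((p : ℝ)⁻¹ * (r : ℝ)⁻¹) + if p = r then N * (p : ℝ)⁻¹ else 0 := by
  rcases eq_or_ne p r with rfl | hpr
  · calc ∑ n ∈ Icc 1 N, (if p ∣ n then (1 : ℝ) else 0) * (if p ∣ n then 1 else 0)
        = (N / p : ℕ) := by
          simp_rw [ite_zero_mul_ite_zero, and_self, mul_one, sum_Icc_ite_dvd]
      _ ≤ N / p := Nat.cast_div_le
      _ ≤ N * ((p : ℝ)⁻¹ * (p : ℝ)⁻¹) + if p = p then N * (p : ℝ)⁻¹ else 0 := by
        rw [if_pos rfl, div_eq_mul_inv]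
        exact le_add_of_nonneg_left (by positivity)
  · calc ∑ n ∈ Icc 1 N, (if p ∣ n then (1 : ℝ) else 0) * (if r ∣ n then 1 else 0)
        = (N / (p * r) : ℕ) := by
          have hdvd (n : ℕ) : p ∣ n ∧ r ∣ n ↔ p * r ∣ n :=
            ⟨fun hn ↦ (h hpr).mul_dvd_of_dvd_of_dvd hn.1 hn.2,
              fun hn ↦ ⟨dvd_of_mul_right_dvd hn, dvd_of_mul_left_dvd hn⟩⟩
          simp_rw [ite_zero_mul_ite_zero, hdvd, mul_one, sum_Icc_ite_dvd]
      _ ≤ N / (p * r : ℕ) := Nat.cast_div_le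
      _ = N * ((p : ℝ)⁻¹ * (r : ℝ)⁻¹) + if p = r then N * (p : ℝ)⁻¹ else 0 := by
        rw [if_neg hpr, add_zero, Nat.cast_mul, div_eq_mul_inv, mul_inv]

lemma sum_divCount_sq_le (hP : (P : Set ℕ).Pairwise Nat.Coprime) (N : ℕ) :
    ∑ n ∈ Icc 1 N, divCount P n ^ 2 ≤
      N * (∑ p ∈ P, (p : ℝ)⁻¹) ^ 2 + N * ∑ p ∈ P, (p : ℝ)⁻¹ := by
  calc ∑ n ∈ Icc 1 N, divCount P n ^ 2
      = ∑ p ∈ P, ∑ r ∈ P, ∑ n ∈ Icc 1 N,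
          (if p ∣ n then (1 : ℝ) else 0) * (if r ∣ n then 1 else 0) := by
        simp_rw [divCount_eq_sum, sq, sum_mul_sum]
        rw [sum_comm]
        exact sum_congr rfl fun p _ ↦ sum_comm
    _ ≤ ∑ p ∈ P, ∑ r ∈ P, (N * ((p : ℝ)⁻¹ * (r : ℝ)⁻¹) + if p = r then N * (p : ℝ)⁻¹ else 0) :=
        sum_le_sum fun p hp ↦ sum_le_sum fun r hr ↦ sum_Icc_ite_dvd_mul_ite_dvd_le (hP hp hr) N
    _ = N * (∑ p ∈ P, (p : ℝ)⁻¹) ^ 2 + N * ∑ p ∈ P, (p : ℝ)⁻¹ := by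
        simp_rw [sum_add_distrib, sum_ite_eq, sum_ite_mem, inter_self, ← mul_sum, ← sum_mul, sq]

lemma sum_divCount_sub_sq_le (hP : (P : Set ℕ).Pairwise Nat.Coprime) (hPN : P.card ≤ N) :
    ∑ n ∈ Icc 1 N, (divCount P n - ∑ p ∈ P, (p : ℝ)⁻¹) ^ 2 ≤ 3 * N * ∑ p ∈ P, (p : ℝ)⁻¹ := by
  set μ := ∑ p ∈ P, (p : ℝ)⁻¹
  have hμ : 0 ≤ μ := sum_nonneg fun p _ ↦ inv_nonneg.2 (Nat.cast_nonneg p)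
  have hexpand : ∑ n ∈ Icc 1 N, (divCount P n - μ) ^ 2 =
      ∑ n ∈ Icc 1 N, divCount P n ^ 2 - 2 * μ * ∑ n ∈ Icc 1 N, divCount P n + N * μ ^ 2 := by
    simp_rw [sub_sq, sum_add_distrib, sum_sub_distrib, mul_sum, sum_const, Nat.card_Icc,
      Nat.add_sub_cancel, nsmul_eq_mul, mul_right_comm]
  have hfirst := mul_le_mul_of_nonneg_left (mul_sum_inv_sub_card_le_sum_divCount P N) hμ
  have hcard := mul_le_mul_of_nonneg_left (Nat.cast_le (α := ℝ).2 hPN) hμ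
  rw [hexpand]
  linarith [sum_divCount_sq_le hP N]

lemma card_filter_divCount_lt_mul_le (hP : (P : Set ℕ).Pairwise Nat.Coprime) (hPN : P.card ≤ N) :
    ((Icc 1 N).filter fun n ↦ divCount P n < (∑ p ∈ P, (p : ℝ)⁻¹) / 2).card *
      ∑ p ∈ P, (p : ℝ)⁻¹ ≤ 12 * N := by
  set μ := ∑ p ∈ P, (p : ℝ)⁻¹
  have hμ : 0 ≤ μ := sum_nonneg fun p _ ↦ inv_nonneg.2 (Nat.cast_nonneg p)
  rcases hμ.eq_or_lt with hμ₀ | hμ₀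
  · rw [← hμ₀, mul_zero]
    positivity
  set B := (Icc 1 N).filter fun n ↦ divCount P n < μ / 2
  have hchebyshev : B.card * (μ / 2) ^ 2 ≤ 3 * N * μ :=
    calc B.card * (μ / 2) ^ 2 = ∑ n ∈ B, (μ / 2) ^ 2 := by rw [sum_const, nsmul_eq_mul]
      _ ≤ ∑ n ∈ B, (divCount P n - μ) ^ 2 := sum_le_sum fun n hn ↦ by
          nlinarith [(mem_filter.1 hn).2]
      _ ≤ ∑ n ∈ Icc 1 N, (divCount P n - μ) ^ 2 :=
          sum_le_sum_of_subset_of_nonneg (filter_subset ..) fun _ _ _ ↦ sq_nonneg _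
      _ ≤ 3 * N * μ := sum_divCount_sub_sq_le hP hPN
  exact le_of_mul_le_mul_right (by linarith) hμ₀

end Turan

section Density

lemma sum_Ioc_one_inv_sq_le (N : ℕ) : ∑ k ∈ Finset.Ioc 1 N, ((k : ℝ) ^ 2)⁻¹ ≤ 3 / 4 := by
  rcases lt_or_ge N 2 with hN | hN
  · rw [Finset.Ioc_eq_empty (by lia), Finset.sum_empty]
    norm_num
  · have htail := sum_Ioc_inv_sq_le_sub (α := ℝ) two_ne_zero hN
    rw [← Finset.sum_Ioc_consecutive _ one_le_two hN,
      show Finset.Ioc 1 2 = {2} from rfl, Finset.sum_singleton]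
    have : (0 : ℝ) ≤ (N : ℝ)⁻¹ := inv_nonneg.2 (Nat.cast_nonneg N)
    norm_num at htail ⊢
    linarith

lemma div_four_le_card_filter_squarefree (N : ℕ) :
    (N / 4 : ℝ) ≤ ((Finset.Icc 1 N).filter Squarefree).card := by
  have hcover : (Finset.Icc 1 N).filter (¬ Squarefree ·) ⊆
      (Finset.Ioc 1 N).biUnion fun k ↦ (Finset.Icc 1 N).filter (k ^ 2 ∣ ·) := fun n hn ↦ by
    obtain ⟨hnN, hn⟩ := Finset.mem_filter.1 hn
    obtain ⟨p, hp, hpn⟩ : ∃ p, p.Prime ∧ p * p ∣ n := by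
      simpa [Nat.squarefree_iff_prime_squarefree] using hn
    rw [← sq] at hpn
    have hpN : p ≤ N := (Nat.le_self_pow two_ne_zero p).trans
      ((Nat.le_of_dvd (Finset.mem_Icc.1 hnN).1 hpn).trans (Finset.mem_Icc.1 hnN).2)
    exact Finset.mem_biUnion.2
      ⟨p, Finset.mem_Ioc.2 ⟨hp.one_lt, hpN⟩, Finset.mem_filter.2 ⟨hnN, hpn⟩⟩
  have hbad : (((Finset.Icc 1 N).filter (¬ Squarefree ·)).card : ℝ) ≤ N * (3 / 4) :=
    calc (((Finset.Icc 1 N).filter (¬ Squarefree ·)).card : ℝ)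
        ≤ ∑ k ∈ Finset.Ioc 1 N, (((Finset.Icc 1 N).filter (k ^ 2 ∣ ·)).card : ℝ) :=
          mod_cast (Finset.card_le_card hcover).trans Finset.card_biUnion_le
      _ ≤ ∑ k ∈ Finset.Ioc 1 N, (N : ℝ) * ((k : ℝ) ^ 2)⁻¹ := Finset.sum_le_sum fun k _ ↦ by
          rw [show ((Finset.Icc 1 N).filter (k ^ 2 ∣ ·)).card = N / k ^ 2 from
            Nat.Ioc_filter_dvd_card_eq_div N _, ← div_eq_mul_inv, ← Nat.cast_pow]
          exact Nat.cast_div_le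
      _ ≤ N * (3 / 4) := by
          rw [← Finset.mul_sum]
          exact mul_le_mul_of_nonneg_left (sum_Ioc_one_inv_sq_le N) (Nat.cast_nonneg N)
  have htotal : (((Finset.Icc 1 N).filter Squarefree).card : ℝ) +
      ((Finset.Icc 1 N).filter (¬ Squarefree ·)).card = N := by
    rw [← Nat.cast_add, Finset.card_filter_add_card_filter_not, Nat.card_Icc, Nat.add_sub_cancel]
  linarith

lemma finite_setOf_isFundDiscr (P : ℤ → Prop) (X : ℝ) :
    {D : ℤ | IsFundDiscr D ∧ |(D : ℝ)| ≤ X ∧ P D}.Finite :=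
  (Set.finite_Icc (-⌊X⌋) ⌊X⌋).subset fun D hD ↦ by
    rw [Set.mem_Icc, ← abs_le, Int.le_floor, Int.cast_abs]
    exact hD.2.1

lemma fdCount_le_of_imp {P P' : ℤ → Prop} (h : ∀ D, P D → P' D) (X : ℝ) :
    fdCount P X ≤ fdCount P' X :=
  Set.ncard_le_ncard (fun D hD ↦ ⟨hD.1, hD.2.1, h D hD.2.2⟩) (finite_setOf_isFundDiscr P' X)

lemma IsFundDiscr.ne_zero {D : ℤ} (hD : IsFundDiscr D) : D ≠ 0 := by
  rintro rfl
  obtain ⟨-, ⟨-, h⟩ | ⟨m, hm, -, h⟩⟩ := hD <;> lia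

/-- The negative fundamental discriminant attached to a squarefree `n`, that is the discriminant of
`ℚ(√-n)`. -/
def negDiscr (n : ℕ) : ℤ := if n % 4 = 3 then -n else -(4 * n)

lemma isFundDiscr_negDiscr {n : ℕ} (hn : Squarefree n) : IsFundDiscr (negDiscr n) := by
  have hn' : Squarefree (-n : ℤ) := by
    rwa [← Int.squarefree_natAbs, Int.natAbs_neg, Int.natAbs_natCast]
  have hn₄ : ¬ 4 ∣ n := fun h ↦ by simpa using hn 2 h
  rw [negDiscr]
  split_ifs with h
  · exact ⟨by lia, Or.inl ⟨hn', by lia⟩⟩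
  · exact ⟨by lia, Or.inr ⟨-n, by ring, hn', by lia⟩⟩

lemma negDiscr_injOn_squarefree : Set.InjOn negDiscr {n | Squarefree n} := fun n hn n' hn' h ↦ by
  have hmod {m : ℕ} (hm : Squarefree m) : m % 4 ≠ 0 := fun h ↦ by
    simpa using hm 2 (Nat.dvd_of_mod_eq_zero h)
  have := hmod hn
  have := hmod hn'
  unfold negDiscr at h
  lia

lemma abs_negDiscr_le (n : ℕ) : |(negDiscr n : ℝ)| ≤ 4 * n := by
  rw [← Int.cast_abs]
  have : |negDiscr n| ≤ 4 * n := by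
    rw [abs_le, negDiscr]
    lia
  exact_mod_cast this

lemma div_le_fdCount_true {X : ℝ} (hX : 4 ≤ X) : X / 32 ≤ fdCount (fun _ ↦ True) X := by
  set N := ⌊X / 4⌋₊
  have hN₁ : (1 : ℝ) ≤ N := Nat.one_le_cast.2 (Nat.le_floor (by norm_num; linarith))
  have hNX : (N : ℝ) ≤ X / 4 := Nat.floor_le (by linarith)
  have hXN : X / 4 < N + 1 := Nat.lt_floor_add_one _
  have hcard : ((Finset.Icc 1 N).filter Squarefree).card ≤ fdCount (fun _ ↦ True) X := by
    rw [← Set.ncard_coe_finset]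
    refine Set.ncard_le_ncard_of_injOn negDiscr (fun n hn ↦ ?_)
      (negDiscr_injOn_squarefree.mono fun n hn ↦ (Finset.mem_filter.1 hn).2)
      (finite_setOf_isFundDiscr _ X)
    obtain ⟨hnN, hn⟩ := Finset.mem_filter.1 hn
    have hnN' : (n : ℝ) ≤ N := Nat.cast_le.2 (Finset.mem_Icc.1 hnN).2
    exact ⟨isFundDiscr_negDiscr hn, (abs_negDiscr_le n).trans (by linarith), trivial⟩
  calc X / 32 ≤ N / 4 := by linarith
    _ ≤ ((Finset.Icc 1 N).filter Squarefree).card := div_four_le_card_filter_squarefree N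
    _ ≤ fdCount (fun _ ↦ True) X := Nat.cast_le.2 hcard

/-- The number of `1 ≤ n ≤ N` violating `Q`. -/
def failCount (Q : ℕ → Prop) (N : ℕ) : ℕ := {n ∈ Set.Icc 1 N | ¬ Q n}.ncard

/-- `Q` holds for 100% of positive integers, in the sense of natural density. -/
def AlmostAll (Q : ℕ → Prop) : Prop :=
  (fun N : ℕ ↦ (failCount Q N : ℝ)) =o[atTop] fun N ↦ (N : ℝ)

variable {P : ℤ → Prop} {Q R : ℕ → Prop}

lemma failCount_le_add_of_le {n₀ : ℕ} (h : ∀ n, n₀ ≤ n → Q n → R n) (N : ℕ) :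
    failCount R N ≤ failCount Q N + n₀ := by
  have hcover : {n ∈ Set.Icc 1 N | ¬ R n} ⊆ {n ∈ Set.Icc 1 N | ¬ Q n} ∪ Finset.range n₀ :=
    fun n hn ↦ (lt_or_ge n n₀).elim (fun hlt ↦ Or.inr (Finset.mem_coe.2 (Finset.mem_range.2 hlt)))
      fun hge ↦ Or.inl ⟨hn.1, fun hQn ↦ hn.2 (h n hge hQn)⟩
  exact (Set.ncard_le_ncard hcover
    (((Set.finite_Icc 1 N).sep _).union (Finset.finite_toSet _))).trans
      ((Set.ncard_union_le _ _).trans_eq (by rw [Set.ncard_coe_finset, Finset.card_range]; rfl))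

lemma AlmostAll.mono_of_eventually (hQ : AlmostAll Q) (h : ∀ᶠ n in atTop, Q n → R n) :
    AlmostAll R := by
  obtain ⟨n₀, hn₀⟩ := eventually_atTop.1 h
  have hconst : (fun _ : ℕ ↦ (n₀ : ℝ)) =o[atTop] fun N : ℕ ↦ (N : ℝ) :=
    (Asymptotics.isLittleO_const_id_atTop (n₀ : ℝ)).natCast_atTop
  refine Asymptotics.IsBigO.trans_isLittleO (.of_norm_le fun N ↦ ?_) (hQ.add hconst)
  rw [Real.norm_natCast]
  exact_mod_cast failCount_le_add_of_le hn₀ N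

lemma fdCount_true_le_add (h : ∀ D : ℤ, Q D.natAbs → P D) (X : ℝ) :
    fdCount (fun _ ↦ True) X ≤ fdCount P X + 2 * failCount Q ⌊X⌋₊ := by
  set B := {n ∈ Set.Icc 1 ⌊X⌋₊ | ¬ Q n}
  have hB : B.Finite := (Set.finite_Icc 1 ⌊X⌋₊).sep _
  have hcover : {D : ℤ | IsFundDiscr D ∧ |(D : ℝ)| ≤ X ∧ True} ⊆
      {D : ℤ | IsFundDiscr D ∧ |(D : ℝ)| ≤ X ∧ P D} ∪
        (Set.image (fun n : ℕ ↦ (n : ℤ)) B ∪ Set.image (fun n : ℕ ↦ -(n : ℤ)) B) :=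
      fun D ⟨hD, hDX, _⟩ ↦ by
    by_cases hP : P D
    · exact Or.inl ⟨hD, hDX, hP⟩
    · have hDB : D.natAbs ∈ B :=
        ⟨⟨Int.natAbs_pos.2 hD.ne_zero, Nat.le_floor (by rwa [Nat.cast_natAbs, Int.cast_abs])⟩,
          fun hQ ↦ hP (h D hQ)⟩
      exact Or.inr (D.natAbs_eq.imp (fun h ↦ ⟨_, hDB, h.symm⟩) fun h ↦ ⟨_, hDB, h.symm⟩)
  calc fdCount (fun _ ↦ True) X
      ≤ fdCount P X + ((Set.image (fun n : ℕ ↦ (n : ℤ)) B).ncard +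
        (Set.image (fun n : ℕ ↦ -(n : ℤ)) B).ncard) :=
        (Set.ncard_le_ncard hcover ((finite_setOf_isFundDiscr P X).union
          ((hB.image _).union (hB.image _)))).trans
          ((Set.ncard_union_le _ _).trans (add_le_add_right (Set.ncard_union_le _ _) _))
    _ ≤ fdCount P X + 2 * B.ncard := by
        rw [two_mul]
        gcongr <;> exact Set.ncard_image_le hB

lemma AlmostAll.fdDensityOne (hQ : AlmostAll Q) (h : ∀ D : ℤ, Q D.natAbs → P D) :
    FdDensityOne P := by
  have hlim : Tendsto (fun X : ℝ ↦ 1 - 64 * ((failCount Q ⌊X⌋₊ : ℝ) / ⌊X⌋₊)) atTop (𝓝 1) := by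
    simpa using ((hQ.tendsto_div_nhds_zero.comp tendsto_nat_floor_atTop).const_mul 64).const_sub 1
  refine tendsto_of_tendsto_of_tendsto_of_le_of_le' hlim tendsto_const_nhds ?_ ?_
  · filter_upwards [eventually_ge_atTop 4] with X hX
    have hfloor : (0 : ℝ) < ⌊X⌋₊ := Nat.cast_pos.2 (Nat.floor_pos.2 (by linarith))
    have hfloorX : (⌊X⌋₊ : ℝ) ≤ X := Nat.floor_le (by linarith)
    have htotal := div_le_fdCount_true hX
    have hcount : (fdCount (fun _ ↦ True) X : ℝ) ≤ fdCount P X + 2 * failCount Q ⌊X⌋₊ :=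
      mod_cast fdCount_true_le_add h X
    have hfail : (failCount Q ⌊X⌋₊ : ℝ) ≤
        failCount Q ⌊X⌋₊ / ⌊X⌋₊ * (32 * fdCount (fun _ ↦ True) X) :=
      calc (failCount Q ⌊X⌋₊ : ℝ) = failCount Q ⌊X⌋₊ / ⌊X⌋₊ * ⌊X⌋₊ :=
            (div_mul_cancel₀ _ hfloor.ne').symm
        _ ≤ failCount Q ⌊X⌋₊ / ⌊X⌋₊ * (32 * fdCount (fun _ ↦ True) X) := by
            gcongr
            linarith
    rw [le_div_iff₀ (by linarith)]
    linarith
  · exact Eventually.of_forall fun X ↦ div_le_one_of_le₀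
      (Nat.cast_le.2 (fdCount_le_of_imp (fun _ _ ↦ trivial) X)) (Nat.cast_nonneg _)

end Density

section AlmostAllRich

/-- The odd primes less than `N`. -/
def oddPrimesBelow (N : ℕ) : Finset ℕ := N.primesBelow.erase 2

lemma prime_of_mem_oddPrimesBelow {N p : ℕ} (hp : p ∈ oddPrimesBelow N) : p.Prime :=
  Nat.prime_of_mem_primesBelow (Finset.mem_of_mem_erase hp)

lemma two_lt_of_mem_oddPrimesBelow {N p : ℕ} (hp : p ∈ oddPrimesBelow N) : 2 < p :=
  (prime_of_mem_oddPrimesBelow hp).two_le.lt_of_ne' (Finset.ne_of_mem_erase hp)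

lemma lt_of_mem_oddPrimesBelow {N p : ℕ} (hp : p ∈ oddPrimesBelow N) : p < N :=
  Nat.lt_of_mem_primesBelow (Finset.mem_of_mem_erase hp)

lemma pairwise_coprime_oddPrimesBelow (N : ℕ) :
    (oddPrimesBelow N : Set ℕ).Pairwise Nat.Coprime := fun _ hp _ hr hpr ↦
  (Nat.coprime_primes (prime_of_mem_oddPrimesBelow hp) (prime_of_mem_oddPrimesBelow hr)).2 hpr

lemma card_oddPrimesBelow_le (N : ℕ) : (oddPrimesBelow N).card ≤ N :=
  (Finset.card_le_card fun _ hp ↦ Finset.mem_range.2 (lt_of_mem_oddPrimesBelow hp)).trans_eq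
    (Finset.card_range N)

lemma log_log_le_two_mul_sum_oddPrimesBelow_inv_add_one (N : ℕ) :
    Real.log (Real.log N) ≤ 2 * ∑ p ∈ oddPrimesBelow N, (p : ℝ)⁻¹ + 1 := by
  have herase : ∑ p ∈ N.primesBelow, (p : ℝ)⁻¹ ≤ 2⁻¹ + ∑ p ∈ oddPrimesBelow N, (p : ℝ)⁻¹ :=
    calc ∑ p ∈ N.primesBelow, (p : ℝ)⁻¹ ≤ ∑ p ∈ insert 2 (oddPrimesBelow N), (p : ℝ)⁻¹ :=
          Finset.sum_le_sum_of_subset_of_nonneg (Finset.insert_erase_subset 2 _)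
            fun p _ _ ↦ inv_nonneg.2 (Nat.cast_nonneg p)
      _ = 2⁻¹ + ∑ p ∈ oddPrimesBelow N, (p : ℝ)⁻¹ :=
          Finset.sum_insert (Finset.notMem_erase 2 _)
  linarith [log_log_le_two_mul_sum_primesBelow_inv N]

lemma hasRichDivisor_of_le_divCount {n K : ℕ} {P : Finset ℕ} {y : ℝ}
    (hP : (P : Set ℕ).Pairwise Nat.Coprime) (h₂ : ∀ p ∈ P, 2 < p) (hy : ∀ p ∈ P, (p : ℝ) ≤ y)
    (hK : (K : ℝ) ≤ divCount P n) (hchars : Real.log (Real.log n) ≤ 2 ^ K)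
    (hsize : K * Real.log y ≤ Real.log (Real.log n) ^ 9) : HasRichDivisor n := by
  obtain ⟨S, hS, rfl⟩ := Finset.exists_subset_card_eq (Nat.cast_le.1 hK)
  have hSP : S ⊆ P := hS.trans (Finset.filter_subset ..)
  obtain ⟨d, hd, hdn, hcard, hlogd⟩ := exists_dvd_two_pow_le_card_quadChars
    (hP.mono (Finset.coe_subset.2 hSP)) (fun p hp ↦ h₂ p (hSP hp))
    (fun p hp ↦ (Finset.mem_filter.1 (hS hp)).2) fun p hp ↦ hy p (hSP hp)
  exact ⟨d, hd, hdn, hchars.trans (mod_cast hcard), hlogd.trans hsize⟩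

lemma log_log_mem_Icc_of_mem_Ioc_sqrt {n N : ℕ} (hN : 4 ≤ N) (hn : n ∈ Set.Ioc N.sqrt N) :
    Real.log (Real.log n) ∈ Set.Icc (Real.log (Real.log N) - 1) (Real.log (Real.log N)) := by
  have hn₂ : 1 < n := (Nat.le_sqrt'.2 (by lia : 1 ^ 2 ≤ N)).trans_lt hn.1
  have hlogn : 0 < Real.log n := Real.log_pos (Nat.one_lt_cast.2 hn₂)
  have hlogN : Real.log n ≤ Real.log N :=
    Real.log_le_log (by positivity) (Nat.cast_le.2 hn.2)
  refine ⟨?_, Real.log_le_log hlogn hlogN⟩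
  have hlogN' : Real.log N ≤ 2 * Real.log n := by
    have hsq : (N : ℝ) ≤ n ^ 2 := mod_cast (Nat.sqrt_lt'.1 hn.1).le
    simpa using Real.log_le_log (Nat.cast_pos.2 (by lia)) hsq
  have := Real.log_le_log (hlogn.trans_le hlogN) hlogN'
  rw [Real.log_mul two_ne_zero hlogn.ne'] at this
  linarith [Real.log_two_lt_d9]

lemma eventually_exists_le_two_pow : ∀ᶠ L : ℝ in atTop,
    ∃ K : ℕ, L ≤ 2 ^ K ∧ K ≤ 2 * Real.log L - 1 / 4 ∧ K * L ^ 8 ≤ (L - 1) ^ 9 := by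
  have hlog : ∀ᶠ L : ℝ in atTop, Real.log L ≤ 1 / 1024 * L := by
    filter_upwards [Real.isLittleO_log_id_atTop.bound (by norm_num : (0 : ℝ) < 1 / 1024),
      eventually_ge_atTop 0] with L hL hL₀
    rw [id, Real.norm_of_nonneg hL₀] at hL
    exact (Real.le_norm_self _).trans hL
  filter_upwards [hlog, Real.tendsto_log_atTop.eventually_ge_atTop 3, eventually_ge_atTop 2]
    with L hL hlogL hL₂
  have hK : (⌈Real.log L / Real.log 2⌉₊ : ℝ) ≤ 2 * Real.log L - 1 / 4 := by
    have hdiv : Real.log L / Real.log 2 ≤ 3 / 2 * Real.log L := by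
      rw [div_le_iff₀ (Real.log_pos one_lt_two)]
      nlinarith [Real.log_two_gt_d9]
    linarith [Nat.ceil_lt_add_one (a := Real.log L / Real.log 2) (by positivity)]
  refine ⟨_, ?_, hK, ?_⟩
  · rw [← Real.log_le_log_iff (by linarith) (by positivity), Real.log_pow,
      ← div_le_iff₀ (Real.log_pos one_lt_two)]
    exact Nat.le_ceil _
  · calc (⌈Real.log L / Real.log 2⌉₊ : ℝ) * L ^ 8 ≤ L / 512 * L ^ 8 := by gcongr; linarith
      _ = (L / 2) ^ 9 := by ring
      _ ≤ (L - 1) ^ 9 := by gcongr; linarith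

lemma failCount_hasRichDivisor_le {N K : ℕ} {P : Finset ℕ} {y : ℝ} (hN : 4 ≤ N)
    (hL : 1 ≤ Real.log (Real.log N)) (hP : (P : Set ℕ).Pairwise Nat.Coprime)
    (h₂ : ∀ p ∈ P, 2 < p) (hy : ∀ p ∈ P, (p : ℝ) ≤ y) (hK : (K : ℝ) ≤ (∑ p ∈ P, (p : ℝ)⁻¹) / 2)
    (hchars : Real.log (Real.log N) ≤ 2 ^ K)
    (hsize : K * Real.log y ≤ (Real.log (Real.log N) - 1) ^ 9) :
    failCount HasRichDivisor N ≤ N.sqrt +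
      ((Finset.Icc 1 N).filter fun n ↦ divCount P n < (∑ p ∈ P, (p : ℝ)⁻¹) / 2).card := by
  set B := (Finset.Icc 1 N).filter fun n ↦ divCount P n < (∑ p ∈ P, (p : ℝ)⁻¹) / 2
  have hcover : {n ∈ Set.Icc 1 N | ¬ HasRichDivisor n} ⊆ ↑(Finset.Icc 1 N.sqrt ∪ B) := by
    rintro n ⟨hnN, hn⟩
    by_contra hnB
    obtain ⟨hnsqrt, hcount⟩ := not_or.1 (mt Finset.mem_union.2 hnB)
    have hcount' : (∑ p ∈ P, (p : ℝ)⁻¹) / 2 ≤ divCount P n := not_lt.1 fun hlt ↦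
      hcount (Finset.mem_filter.2 ⟨Finset.mem_Icc.2 hnN, hlt⟩)
    have hnsqrt' : N.sqrt < n := not_le.1 fun hle ↦ hnsqrt (Finset.mem_Icc.2 ⟨hnN.1, hle⟩)
    obtain ⟨hlower, hupper⟩ := log_log_mem_Icc_of_mem_Ioc_sqrt hN ⟨hnsqrt', hnN.2⟩
    exact hn (hasRichDivisor_of_le_divCount hP h₂ hy (hK.trans hcount') (hupper.trans hchars)
      (hsize.trans (pow_le_pow_left₀ (sub_nonneg.2 hL) hlower 9)))
  calc failCount HasRichDivisor N ≤ (Finset.Icc 1 N.sqrt ∪ B).card :=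
        (Set.ncard_le_ncard hcover (Finset.finite_toSet _)).trans_eq (Set.ncard_coe_finset _)
    _ ≤ (Finset.Icc 1 N.sqrt).card + B.card := Finset.card_union_le _ _
    _ = N.sqrt + B.card := by rw [Nat.card_Icc, Nat.add_sub_cancel]

lemma four_mul_log_sub_half_le_sum_oddPrimesBelow_inv {L : ℝ} (hL : 0 < L) :
    4 * Real.log L - 1 / 2 ≤ ∑ p ∈ oddPrimesBelow ⌈Real.exp (L ^ 8)⌉₊, (p : ℝ)⁻¹ := by
  have hceil : L ^ 8 ≤ Real.log ⌈Real.exp (L ^ 8)⌉₊ :=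
    (Real.log_exp (L ^ 8)).symm.trans_le (Real.log_le_log (Real.exp_pos _) (Nat.le_ceil _))
  have hlog := Real.log_le_log (by positivity) hceil
  rw [Real.log_pow, Nat.cast_ofNat] at hlog
  linarith [log_log_le_two_mul_sum_oddPrimesBelow_inv_add_one ⌈Real.exp (L ^ 8)⌉₊]

lemma eventually_failCount_hasRichDivisor_le : ∀ᶠ N : ℕ in atTop,
    (failCount HasRichDivisor N : ℝ) ≤
      N.sqrt + 12 / (4 * Real.log (Real.log (Real.log N)) - 1 / 2) * N := by
  have hpow : ∀ᶠ L : ℝ in atTop, L ^ 8 ≤ Real.exp L := by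
    filter_upwards [(Real.isLittleO_pow_exp_atTop (n := 8)).bound one_pos] with L hL
    simpa using (Real.le_norm_self _).trans hL
  filter_upwards [tendsto_log_log_natCast_atTop.eventually eventually_exists_le_two_pow,
    tendsto_log_log_natCast_atTop.eventually hpow, eventually_ge_atTop 4,
    tendsto_log_log_natCast_atTop.eventually_ge_atTop 1,
    (Real.tendsto_log_atTop.comp tendsto_log_log_natCast_atTop).eventually_ge_atTop 1]
    with N ⟨K, hLK, hKL, hKL₈⟩ hL₈ hN hL₁ hlogL
  set L := Real.log (Real.log N)
  set P := oddPrimesBelow ⌈Real.exp (L ^ 8)⌉₊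
  set μ := ∑ p ∈ P, (p : ℝ)⁻¹
  have hlogL' : 1 ≤ Real.log L := hlogL
  have hμ : 4 * Real.log L - 1 / 2 ≤ μ :=
    four_mul_log_sub_half_le_sum_oddPrimesBelow_inv (one_pos.trans_le hL₁)
  have hPN : P.card ≤ N := (card_oddPrimesBelow_le _).trans <| Nat.ceil_le.2 <| by
    have hN₀ : (0 : ℝ) < N := Nat.cast_pos.2 (by lia)
    rw [← Real.le_log_iff_exp_le hN₀]
    rwa [Real.exp_log (Real.log_pos (Nat.one_lt_cast.2 (by lia)))] at hL₈
  have hfail := failCount_hasRichDivisor_le (y := Real.exp (L ^ 8)) hN hL₁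
    (pairwise_coprime_oddPrimesBelow _)
    (fun p ↦ two_lt_of_mem_oddPrimesBelow)
    (fun p hp ↦ (Nat.lt_ceil.1 (lt_of_mem_oddPrimesBelow hp)).le) (K := K) (by linarith) hLK
    (by rwa [Real.log_exp])
  have hturan := card_filter_divCount_lt_mul_le (pairwise_coprime_oddPrimesBelow _) hPN
  refine (Nat.cast_le.2 hfail).trans ?_
  push_cast
  gcongr
  rw [div_mul_eq_mul_div, le_div_iff₀ (by linarith)]
  exact (mul_le_mul_of_nonneg_left hμ (Nat.cast_nonneg _)).trans hturan

lemma isLittleO_natSqrt_natCast : (fun N : ℕ ↦ (N.sqrt : ℝ)) =o[atTop] fun N : ℕ ↦ (N : ℝ) := by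
  have hone : (fun _ : ℕ ↦ (1 : ℝ)) =o[atTop] fun N : ℕ ↦ √(N : ℝ) :=
    (Asymptotics.isLittleO_const_id_atTop (1 : ℝ)).comp_tendsto
      (Real.tendsto_sqrt_atTop.comp tendsto_natCast_atTop_atTop)
  have hsqrt := hone.mul_isBigO (Asymptotics.isBigO_refl (fun N : ℕ ↦ √(N : ℝ)) atTop)
  simp only [one_mul, Real.mul_self_sqrt (Nat.cast_nonneg _)] at hsqrt
  refine Asymptotics.IsBigO.trans_isLittleO (.of_norm_le fun N ↦ ?_) hsqrt
  rw [Real.norm_natCast]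
  exact Real.nat_sqrt_le_real_sqrt

theorem almostAll_hasRichDivisor : AlmostAll HasRichDivisor := by
  have hlog : Tendsto (fun N : ℕ ↦ 12 / (4 * Real.log (Real.log (Real.log N)) - 1 / 2))
      atTop (𝓝 0) :=
    tendsto_const_nhds.div_atTop <| tendsto_atTop_add_const_right _ _ <|
      (Real.tendsto_log_atTop.comp tendsto_log_log_natCast_atTop).const_mul_atTop four_pos
  have hturan : (fun N : ℕ ↦ 12 / (4 * Real.log (Real.log (Real.log N)) - 1 / 2) * N)
      =o[atTop] fun N : ℕ ↦ (N : ℝ) := by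
    simpa using ((Asymptotics.isLittleO_one_iff ℝ).2 hlog).mul_isBigO
      (Asymptotics.isBigO_refl (fun N : ℕ ↦ (N : ℝ)) atTop)
  refine Asymptotics.IsBigO.trans_isLittleO ?_ (isLittleO_natSqrt_natCast.add hturan)
  refine Asymptotics.IsBigO.of_norm_eventuallyLE ?_
  filter_upwards [eventually_failCount_hasRichDivisor_le] with N hN
  rwa [Real.norm_natCast]

end AlmostAllRich

theorem statement_4_general (e c δ : ℝ) (he : 1 / 2 < e) (hc : 0 < c) (hδ : 0 < δ) :
    FdDensityOne (fun D =>
      ∀ [NeZero D.natAbs],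
        (1 - δ) * (Nat.card {χ : DirichletCharacter ℂ D.natAbs // χ ^ 2 = 1 ∧ χ ≠ 1} : ℝ) ≤
          (Nat.card {χ : DirichletCharacter ℂ D.natAbs // χ ^ 2 = 1 ∧ χ ≠ 1 ∧
            Real.exp (-(c * Real.log (Real.log |(D : ℝ)|) ^ e)) ≤ (χ.LFunction 1).re} : ℝ)) := by
  have hfew := almostAll_hasRichDivisor.mono_of_eventually
    (eventually_card_exceptionalChars_le he hc (half_pos hδ))
  refine hfew.fdDensityOne fun D hD _ ↦ ?_
  rw [← Int.cast_abs, ← Nat.cast_natAbs]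
  exact one_sub_mul_card_le_of_card_exceptionalChars_le hδ.le hD

/-- For all `ε, δ > 0` there is `c > 0` such that for 100% of fundamental discriminants `D`, at
least a proportion `1 - δ` of quadratic Dirichlet characters `χ` mod `|D|` satisfy
`L(1,χ) ≥ exp(-c (log log |D|)^{1 - (log 2)/2 + ε})`. -/
theorem statement_4 (ε δ : ℝ) (hε : 0 < ε) (hδ : 0 < δ) :
    ∃ c : ℝ, 0 < c ∧ FdDensityOne (fun D =>
      ∀ [NeZero D.natAbs],
        (1 - δ) * (Nat.card {χ : DirichletCharacter ℂ D.natAbs // χ ^ 2 = 1 ∧ χ ≠ 1} : ℝ) ≤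
          (Nat.card {χ : DirichletCharacter ℂ D.natAbs // χ ^ 2 = 1 ∧ χ ≠ 1 ∧
            Real.exp (-(c * Real.log (Real.log |(D : ℝ)|) ^ (1 - Real.log 2 / 2 + ε))) ≤
              (χ.LFunction 1).re} : ℝ)) :=
  ⟨1, one_pos, statement_4_general _ 1 δ (by linarith [Real.log_two_lt_d9]) one_pos hδ⟩
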